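/- arXiv:2112.01248 — 2 statements merged into one kernel-verified Lean document; each statement's English description precedes it below -/
import Mathlib

section
/- Let a > 0. Every separated sequence Λ ⊂ ℝ with upper Beurling density D⁺(Λ) < 1 is an interpolating sequence for the Gaussian shift-invariant space V²_a; moreover Λ can be enlarged to a complete interpolating sequence for V²_a, i.e., there is a set Λ′ ⊇ Λ which is a complete interpolating sequence for V²_a. -/
open Filter MeasureTheory

/-- `gaussShiftSum c coef x = ∑_{n∈ℤ} coef n · e^{-c(x-n)²}`, the generic element of the
Gaussian shift-invariant space `V²_c`. -/
noncomputable def gaussShiftSum (c : ℂ) (coef : ℤ → ℂ) (x : ℝ) : ℂ :=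
  ∑' n : ℤ, coef n * Complex.exp (-c * ((x : ℂ) - (n : ℂ)) ^ 2)

/-- A set `Λ ⊆ ℝ` is separated if distinct points are at distance at least some `ε > 0`. -/
def IsSeparatedSet (Λ : Set ℝ) : Prop :=
  ∃ ε > 0, ∀ x ∈ Λ, ∀ y ∈ Λ, x ≠ y → ε ≤ |x - y|

/-- `Λ` is a sampling sequence for `V²_c`:
`A‖f‖² ≤ ∑_{λ∈Λ} |f(λ)|² ≤ B‖f‖²`, where `‖f‖²_{V²} = ∑ |c_n|²`. -/
def IsSamplingV2 (c : ℂ) (Λ : Set ℝ) : Prop :=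
  ∃ A > 0, ∃ B > 0, ∀ coef : ℤ → ℂ, Summable (fun n => ‖coef n‖ ^ 2) →
    A * (∑' n : ℤ, ‖coef n‖ ^ 2) ≤ (∑' lam : Λ, ‖gaussShiftSum c coef (lam : ℝ)‖ ^ 2) ∧
    (∑' lam : Λ, ‖gaussShiftSum c coef (lam : ℝ)‖ ^ 2) ≤ B * (∑' n : ℤ, ‖coef n‖ ^ 2)

/-- `Λ` is an interpolating sequence for `V²_c`: every `ℓ²` data on `Λ` is interpolated by
some `f ∈ V²_c`. -/
def IsInterpolatingV2 (c : ℂ) (Λ : Set ℝ) : Prop :=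
  ∀ a : Λ → ℂ, Summable (fun lam => ‖a lam‖ ^ 2) →
    ∃ coef : ℤ → ℂ, Summable (fun n => ‖coef n‖ ^ 2) ∧
      ∀ lam : Λ, gaussShiftSum c coef (lam : ℝ) = a lam

/-- A complete interpolating sequence is one that is both sampling and interpolating. -/
def IsCompleteInterpolatingV2 (c : ℂ) (Λ : Set ℝ) : Prop :=
  IsSamplingV2 c Λ ∧ IsInterpolatingV2 c Λ

/-- Lower Beurling density `D⁻(Λ) = lim_{r→∞} inf_x card(Λ ∩ [x,x+r]) / r`. -/
noncomputable def lowerBeurlingDensity (Λ : Set ℝ) : ℝ :=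
  liminf (fun r : ℝ => (⨅ x : ℝ, ((Λ ∩ Set.Icc x (x + r)).ncard : ℝ)) / r) atTop

/-- Upper Beurling density `D⁺(Λ) = lim_{r→∞} sup_x card(Λ ∩ [x,x+r]) / r`. -/
noncomputable def upperBeurlingDensity (Λ : Set ℝ) : ℝ :=
  limsup (fun r : ℝ => (⨆ x : ℝ, ((Λ ∩ Set.Icc x (x + r)).ncard : ℝ)) / r) atTop

/-! Let `A = (e^{-c(λ_j - n)²})` be the matrix of `coef ↦ f(λ_j)`. If `λ` is separated, stays at
bounded distance from `ℤ` and the deviations `λ_k - k` have means less than `1/2` in absolute value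
over long blocks (Avdonin's condition), then `A` is invertible on `ℓ²`: up to diagonal factors a
square section of `A` is the Vandermonde matrix of the nodes `e^{2 c λ_j}`, so its inverse consists
of the coefficients of Lagrange basis polynomials. The condition on the means makes these decay
exponentially off the diagonal, uniformly in the section. By Schur's test the sections have
uniformly bounded inverses, and invertibility passes to the limit by the finite section method.

If `D⁺(Λ) < 1`, every long block of length `N` has room for extra points which raise the number of
points to `N` and put their mean close to the centre of the block. Enumerating the result in
increasing order gives a sequence satisfying Avdonin's condition. Subsets of interpolating sets are
interpolating.
-/

open scoped lp

/-- `expDecaySum κ = ∑_{k∈ℤ} e^{-κ|k|}`, the row and column sums allowed by off-diagonal decay of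
rate `κ`. -/
noncomputable def expDecaySum (κ : ℝ) : ℝ :=
  ∑' k : ℤ, Real.exp (-κ * |(k : ℝ)|)

theorem summable_exp_neg_mul_abs_intCast {κ : ℝ} (hκ : 0 < κ) :
    Summable fun k : ℤ => Real.exp (-κ * |(k : ℝ)|) := by
  have h : Summable fun n : ℕ => Real.exp (-κ * |((n : ℤ) : ℝ)|) := by
    refine (Real.summable_exp_nat_mul_iff.mpr (neg_lt_zero.mpr hκ)).congr fun n => ?_
    rw [Int.cast_natCast, abs_of_nonneg n.cast_nonneg, mul_comm]
  exact .of_nat_of_neg h (by simpa only [Int.cast_neg, abs_neg] using h)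

theorem expDecaySum_pos {κ : ℝ} (hκ : 0 < κ) : 0 < expDecaySum κ :=
  (summable_exp_neg_mul_abs_intCast hκ).tsum_pos (fun _ => (Real.exp_pos _).le) 0 (Real.exp_pos _)

theorem sum_exp_neg_mul_abs_le {ι : Type*} {κ : ℝ} (hκ : 0 < κ) {e : ι → ℤ}
    (he : Function.Injective e) (i : ℤ) (s : Finset ι) :
    ∑ k ∈ s, Real.exp (-κ * |(e k : ℝ) - i|) ≤ expDecaySum κ := by
  have hinj : Function.Injective fun k => e k - i := fun k l h => he (sub_left_injective h)
  calc ∑ k ∈ s, Real.exp (-κ * |(e k : ℝ) - i|)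
      = ∑ m ∈ s.map ⟨_, hinj⟩, Real.exp (-κ * |(m : ℝ)|) := by
        simp only [Finset.sum_map, Function.Embedding.coeFn_mk, Int.cast_sub]
    _ ≤ expDecaySum κ :=
        (summable_exp_neg_mul_abs_intCast hκ).sum_le_tsum _ fun _ _ => (Real.exp_pos _).le

section SchurTest

variable {𝕜 ι κ : Type*} [RCLike 𝕜] {K : ι → κ → 𝕜} {R₁ R₂ : ℝ}

theorem norm_sq_sum_mul_le (hrow : ∀ j (s : Finset κ), ∑ n ∈ s, ‖K j n‖ ≤ R₁)
    (j : ι) (s : Finset κ) (f : κ → 𝕜) :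
    ‖∑ n ∈ s, K j n * f n‖ ^ 2 ≤ R₁ * ∑ n ∈ s, ‖K j n‖ * ‖f n‖ ^ 2 := by
  calc ‖∑ n ∈ s, K j n * f n‖ ^ 2
      ≤ (∑ n ∈ s, ‖K j n‖ * ‖f n‖) ^ 2 := by
        gcongr
        simpa only [norm_mul] using norm_sum_le s fun n => K j n * f n
    _ ≤ (∑ n ∈ s, ‖K j n‖) * ∑ n ∈ s, ‖K j n‖ * ‖f n‖ ^ 2 :=
        Finset.sum_sq_le_sum_mul_sum_of_sq_le_mul s (fun _ _ => norm_nonneg _)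
          (fun _ _ => by positivity) fun _ _ => by ring_nf; rfl
    _ ≤ R₁ * ∑ n ∈ s, ‖K j n‖ * ‖f n‖ ^ 2 := by gcongr; exact hrow j s

theorem sum_norm_sq_sum_mul_le (hR₁ : 0 ≤ R₁) (hrow : ∀ j (s : Finset κ), ∑ n ∈ s, ‖K j n‖ ≤ R₁)
    (hcol : ∀ n (t : Finset ι), ∑ j ∈ t, ‖K j n‖ ≤ R₂)
    (t : Finset ι) (s : Finset κ) (f : κ → 𝕜) :
    ∑ j ∈ t, ‖∑ n ∈ s, K j n * f n‖ ^ 2 ≤ R₁ * R₂ * ∑ n ∈ s, ‖f n‖ ^ 2 := by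
  calc ∑ j ∈ t, ‖∑ n ∈ s, K j n * f n‖ ^ 2
      ≤ ∑ j ∈ t, R₁ * ∑ n ∈ s, ‖K j n‖ * ‖f n‖ ^ 2 :=
        Finset.sum_le_sum fun j _ => norm_sq_sum_mul_le hrow j s f
    _ = R₁ * ∑ n ∈ s, (∑ j ∈ t, ‖K j n‖) * ‖f n‖ ^ 2 := by
        rw [← Finset.mul_sum, Finset.sum_comm]
        simp only [Finset.sum_mul]
    _ ≤ R₁ * ∑ n ∈ s, R₂ * ‖f n‖ ^ 2 := by gcongr with n; exact hcol n t
    _ = R₁ * R₂ * ∑ n ∈ s, ‖f n‖ ^ 2 := by rw [← Finset.mul_sum, mul_assoc]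

open scoped Matrix.Norms.L2Operator in
theorem l2_opNorm_le_sqrt_of_sum_norm_le [Fintype ι] [Fintype κ] [DecidableEq κ]
    {A : Matrix ι κ 𝕜} (hR₁ : 0 ≤ R₁) (hrow : ∀ j (s : Finset κ), ∑ n ∈ s, ‖A j n‖ ≤ R₁)
    (hcol : ∀ n (t : Finset ι), ∑ j ∈ t, ‖A j n‖ ≤ R₂) : ‖A‖ ≤ √(R₁ * R₂) := by
  rw [Matrix.l2_opNorm_def]
  refine ContinuousLinearMap.opNorm_le_bound _ (Real.sqrt_nonneg _) fun f => ?_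
  rw [EuclideanSpace.norm_eq, EuclideanSpace.norm_eq f,
    ← Real.sqrt_mul' _ (Finset.sum_nonneg fun _ _ => sq_nonneg _)]
  exact Real.sqrt_le_sqrt (sum_norm_sq_sum_mul_le hR₁ hrow hcol Finset.univ Finset.univ f)

theorem summable_mul_of_sum_norm_le (hrow : ∀ j (s : Finset κ), ∑ n ∈ s, ‖K j n‖ ≤ R₁)
    (f : ℓ²(κ, 𝕜)) (j : ι) : Summable fun n => K j n * f n := by
  have hK : Summable fun n => ‖K j n‖ := summable_of_sum_le (fun _ => norm_nonneg _) (hrow j)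
  refine .of_norm_bounded (hK.mul_right ‖f‖) fun n => ?_
  rw [norm_mul]
  gcongr
  exact lp.norm_apply_le_norm two_ne_zero f n

theorem sum_norm_sq_tsum_mul_le (hR₁ : 0 ≤ R₁) (hrow : ∀ j (s : Finset κ), ∑ n ∈ s, ‖K j n‖ ≤ R₁)
    (hcol : ∀ n (t : Finset ι), ∑ j ∈ t, ‖K j n‖ ≤ R₂) (f : ℓ²(κ, 𝕜)) (t : Finset ι) :
    ∑ j ∈ t, ‖∑' n, K j n * f n‖ ^ 2 ≤ R₁ * R₂ * ‖f‖ ^ 2 := by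
  have hsum : Summable fun n => ‖f n‖ ^ 2 := by simpa using (lp.memℓp f).summable (by norm_num)
  have hnorm : ∑' n, ‖f n‖ ^ 2 = ‖f‖ ^ 2 := by
    simpa using (lp.norm_rpow_eq_tsum (p := 2) (by norm_num) f).symm
  rw [← hnorm]
  exact le_of_tendsto_of_tendsto'
    (tendsto_finsetSum t fun j _ => ((summable_mul_of_sum_norm_le hrow f j).hasSum.norm).pow 2)
    (hsum.hasSum.const_mul _) fun s => sum_norm_sq_sum_mul_le hR₁ hrow hcol t s f

theorem exists_clm_apply_eq_tsum_mul (hR₁ : 0 ≤ R₁) (hR₂ : 0 ≤ R₂)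
    (hrow : ∀ j (s : Finset κ), ∑ n ∈ s, ‖K j n‖ ≤ R₁)
    (hcol : ∀ n (t : Finset ι), ∑ j ∈ t, ‖K j n‖ ≤ R₂) :
    ∃ T : ℓ²(κ, 𝕜) →L[𝕜] ℓ²(ι, 𝕜), ∀ f j, T f j = ∑' n, K j n * f n := by
  have hsum := summable_mul_of_sum_norm_le (𝕜 := 𝕜) hrow
  have hbound := sum_norm_sq_tsum_mul_le (𝕜 := 𝕜) hR₁ hrow hcol
  have hmem (f : ℓ²(κ, 𝕜)) : Memℓp (fun j => ∑' n, K j n * f n) 2 :=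
    memℓp_gen' fun t => by simpa using hbound f t
  let T : ℓ²(κ, 𝕜) →ₗ[𝕜] ℓ²(ι, 𝕜) :=
    { toFun f := ⟨fun j => ∑' n, K j n * f n, hmem f⟩
      map_add' f g := by
        ext j
        simpa only [lp.coeFn_add, Pi.add_apply, mul_add] using (hsum f j).tsum_add (hsum g j)
      map_smul' a f := by
        ext j
        simpa only [lp.coeFn_smul, Pi.smul_apply, smul_eq_mul, mul_left_comm] using!
          tsum_mul_left (f := fun n => K j n * f n) (a := a) }
  refine ⟨T.mkContinuous √(R₁ * R₂) fun f => ?_, fun f j => rfl⟩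
  refine lp.norm_le_of_forall_sum_le (by norm_num) (by positivity) fun t => ?_
  simpa [mul_pow, Real.sq_sqrt (mul_nonneg hR₁ hR₂)] using! hbound f t

end SchurTest

section ExpDecay

variable {𝕜 ι : Type*} [RCLike 𝕜] {K : ι → ι → 𝕜} {M κ : ℝ} {e : ι → ℤ}

theorem sum_norm_row_le (hM : 0 ≤ M) (hκ : 0 < κ) (he : Function.Injective e)
    (hK : ∀ j n, ‖K j n‖ ≤ M * Real.exp (-κ * |(e j : ℝ) - e n|)) (j : ι) (s : Finset ι) :
    ∑ n ∈ s, ‖K j n‖ ≤ M * expDecaySum κ := by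
  calc ∑ n ∈ s, ‖K j n‖ ≤ M * ∑ n ∈ s, Real.exp (-κ * |(e n : ℝ) - e j|) := by
        rw [Finset.mul_sum]
        gcongr with n
        rw [abs_sub_comm]
        exact hK j n
    _ ≤ M * expDecaySum κ := by gcongr; exact sum_exp_neg_mul_abs_le hκ he (e j) s

theorem sum_norm_col_le (hM : 0 ≤ M) (hκ : 0 < κ) (he : Function.Injective e)
    (hK : ∀ j n, ‖K j n‖ ≤ M * Real.exp (-κ * |(e j : ℝ) - e n|)) (n : ι) (s : Finset ι) :
    ∑ j ∈ s, ‖K j n‖ ≤ M * expDecaySum κ :=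
  sum_norm_row_le (K := fun n j => K j n) hM hκ he
    (fun n j => by rw [abs_sub_comm]; exact hK j n) n s

open scoped Matrix.Norms.L2Operator in
theorem l2_opNorm_le_of_norm_le_exp [Fintype ι] [DecidableEq ι] {A : Matrix ι ι 𝕜} (hM : 0 ≤ M)
    (hκ : 0 < κ) (he : Function.Injective e)
    (hA : ∀ j n, ‖A j n‖ ≤ M * Real.exp (-κ * |(e j : ℝ) - e n|)) : ‖A‖ ≤ M * expDecaySum κ := by
  have hR : 0 ≤ M * expDecaySum κ := mul_nonneg hM (expDecaySum_pos hκ).le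
  calc ‖A‖ ≤ √(M * expDecaySum κ * (M * expDecaySum κ)) :=
        l2_opNorm_le_sqrt_of_sum_norm_le hR (sum_norm_row_le hM hκ he hA)
          (sum_norm_col_le hM hκ he hA)
    _ = M * expDecaySum κ := Real.sqrt_mul_self hR

theorem exists_clm_apply_eq_tsum_mul_of_norm_le_exp (hM : 0 ≤ M) (hκ : 0 < κ)
    (he : Function.Injective e)
    (hK : ∀ j n, ‖K j n‖ ≤ M * Real.exp (-κ * |(e j : ℝ) - e n|)) :
    ∃ T : ℓ²(ι, 𝕜) →L[𝕜] ℓ²(ι, 𝕜), ∀ f j, T f j = ∑' n, K j n * f n :=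
  have hR : 0 ≤ M * expDecaySum κ := mul_nonneg hM (expDecaySum_pos hκ).le
  exists_clm_apply_eq_tsum_mul hR hR (sum_norm_row_le hM hκ he hK) (sum_norm_col_le hM hκ he hK)

end ExpDecay

section FiniteSections

open scoped InnerProductSpace InnerProduct Matrix Matrix.Norms.L2Operator

variable {𝕜 ι κ : Type*} [RCLike 𝕜]

theorem lp_sum_apply (s : Finset κ) (f : κ → ℓ²(ι, 𝕜)) (n : ι) :
    (∑ k ∈ s, f k : ℓ²(ι, 𝕜)) n = ∑ k ∈ s, f k n := by
  rw [lp.coeFn_sum]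
  exact Finset.sum_apply n s fun k => ⇑(f k)

theorem norm_toLp_comp_le [Fintype κ] (e : κ ↪ ι) (f : ℓ²(ι, 𝕜)) :
    ‖WithLp.toLp 2 fun k => f (e k)‖ ≤ ‖f‖ := by
  rw [EuclideanSpace.norm_eq, Real.sqrt_le_left (norm_nonneg f)]
  simpa using lp.sum_rpow_le_norm_rpow (p := 2) (by norm_num) f (Finset.univ.map e)

theorem norm_toLp_comp_eq [Fintype κ] {e : κ ↪ ι} {f : ℓ²(ι, 𝕜)}
    (hf : ∀ n ∉ Set.range e, f n = 0) : ‖WithLp.toLp 2 fun k => f (e k)‖ = ‖f‖ := by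
  have htsum : ‖f‖ ^ 2 = ∑ k, ‖f (e k)‖ ^ 2 := by
    have hsupp : ∀ n ∉ Finset.univ.map e, ‖f n‖ ^ 2 = 0 := fun n hn => by
      simp [hf n (by simpa using hn)]
    have := lp.norm_rpow_eq_tsum (p := 2) (by norm_num) f
    simpa [tsum_eq_sum hsupp] using this
  rw [EuclideanSpace.norm_eq, ← htsum, Real.sqrt_sq (norm_nonneg f)]

variable [DecidableEq ι] {T : ℓ²(ι, 𝕜) →L[𝕜] ℓ²(ι, 𝕜)} {M : ℝ}

/-- The section of the infinite matrix of `T` cut out by the window `e`. -/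
noncomputable def finiteSection (T : ℓ²(ι, 𝕜) →L[𝕜] ℓ²(ι, 𝕜)) (e : κ → ι) : Matrix κ κ 𝕜 :=
  .of fun i j => T (lp.single 2 (e j) 1) (e i)

/-- The finite section method is stable for `T`: arbitrarily large finite sections of its matrix
have left inverses of norm at most `M`. -/
def HasStableSections (T : ℓ²(ι, 𝕜) →L[𝕜] ℓ²(ι, 𝕜)) (M : ℝ) : Prop :=
  ∀ s : Finset ι, ∃ (N : ℕ) (e : Fin N ↪ ι) (H : Matrix (Fin N) (Fin N) 𝕜),
    ↑s ⊆ Set.range e ∧ H * finiteSection T e = 1 ∧ ‖H‖ ≤ M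

theorem finiteSection_adjoint (T : ℓ²(ι, 𝕜) →L[𝕜] ℓ²(ι, 𝕜)) (e : κ → ι) :
    finiteSection (T†) e = (finiteSection T e)ᴴ := by
  ext i j
  calc (T†) (lp.single 2 (e j) 1) (e i)
      = ⟪lp.single 2 (e i) (1 : 𝕜), (T†) (lp.single 2 (e j) 1)⟫_𝕜 := by
        simp [lp.inner_single_left]
    _ = ⟪T (lp.single 2 (e i) 1), lp.single 2 (e j) (1 : 𝕜)⟫_𝕜 :=
        ContinuousLinearMap.adjoint_inner_right T _ _
    _ = (finiteSection T e)ᴴ i j := by simp [lp.inner_single_right, finiteSection]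

theorem HasStableSections.adjoint (h : HasStableSections T M) : HasStableSections (T†) M := by
  intro s
  obtain ⟨N, e, H, hs, hH, hM⟩ := h s
  refine ⟨N, e, Hᴴ, hs, ?_, (Matrix.l2_opNorm_conjTranspose H).trans_le hM⟩
  rw [finiteSection_adjoint, ← Matrix.conjTranspose_mul, mul_eq_one_comm.mp hH,
    Matrix.conjTranspose_one]

theorem finiteSection_mulVec [Fintype κ] (T : ℓ²(ι, 𝕜) →L[𝕜] ℓ²(ι, 𝕜)) {e : κ ↪ ι} {f : ℓ²(ι, 𝕜)}
    (hf : ∀ n ∉ Set.range e, f n = 0) :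
    (finiteSection T e *ᵥ fun k => f (e k)) = fun k => T f (e k) := by
  have hsum : f = ∑ k, f (e k) • lp.single 2 (e k) (1 : 𝕜) := by
    ext n
    by_cases hn : n ∈ Set.range e
    · obtain ⟨k, rfl⟩ := hn
      rw [lp_sum_apply, Fintype.sum_eq_single k fun l hl => by simp [hl.symm]]
      simp
    · have hne (k : κ) : n ≠ e k := fun h => hn ⟨k, h.symm⟩
      rw [lp_sum_apply]
      simp [hf n hn, hne]
  ext i
  conv_rhs => rw [hsum, map_sum, lp_sum_apply]
  simp [Matrix.mulVec, dotProduct, finiteSection, mul_comm]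

theorem norm_le_of_mul_finiteSection_eq_one [Fintype κ] [DecidableEq κ] {e : κ ↪ ι}
    {H : Matrix κ κ 𝕜} (hH : H * finiteSection T e = 1) {f : ℓ²(ι, 𝕜)}
    (hf : ∀ n ∉ Set.range e, f n = 0) : ‖f‖ ≤ ‖H‖ * ‖T f‖ := by
  calc ‖f‖ = ‖WithLp.toLp 2 (H *ᵥ fun k => T f (e k))‖ := by
        rw [← finiteSection_mulVec T hf, Matrix.mulVec_mulVec, hH, Matrix.one_mulVec,
          norm_toLp_comp_eq hf]
    _ ≤ ‖H‖ * ‖WithLp.toLp 2 fun k => T f (e k)‖ :=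
        Matrix.l2_opNorm_mulVec H (WithLp.toLp 2 fun k => T f (e k))
    _ ≤ ‖H‖ * ‖T f‖ := by gcongr; exact norm_toLp_comp_le e (T f)

theorem HasStableSections.norm_le (h : HasStableSections T M) (f : ℓ²(ι, 𝕜)) :
    ‖f‖ ≤ M * ‖T f‖ := by
  have hlim := lp.hasSum_single (p := 2) (by norm_num) f
  refine le_of_tendsto_of_tendsto' hlim.norm
    (((T.continuous.tendsto f).comp hlim).norm.const_mul M) fun s => ?_
  obtain ⟨N, e, H, hs, hH, hM⟩ := h s
  refine (norm_le_of_mul_finiteSection_eq_one hH fun n hn => ?_).trans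
    (mul_le_mul_of_nonneg_right hM (norm_nonneg _))
  have hne : n ∉ s := fun h => hn (hs h)
  rw [lp_sum_apply]
  simp [Finset.sum_pi_single, hne]

theorem HasStableSections.surjective (h : HasStableSections T M) : Function.Surjective T := by
  have hanti : AntilipschitzWith M.toNNReal T := T.antilipschitz_of_bound fun f =>
    (h.norm_le f).trans (by gcongr; exact Real.le_coe_toNNReal M)
  have hclosed : IsClosed (T.range : Set ℓ²(ι, 𝕜)) := hanti.isClosed_range T.uniformContinuous
  have := hclosed.completeSpace_coe
  have hker : T†.ker = ⊥ := LinearMap.ker_eq_bot'.mpr fun f hf => norm_le_zero_iff.mp <| by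
    have hf' : (T†) f = 0 := hf
    simpa [hf'] using h.adjoint.norm_le f
  have hrange : T.range = ⊤ := by
    rw [← Submodule.orthogonal_eq_bot_iff, ContinuousLinearMap.orthogonal_range, hker]
  exact LinearMap.range_eq_top.mp hrange

end FiniteSections

section LagrangeBasis

open Polynomial

variable {𝕜 ι : Type*} [NormedField 𝕜]

theorem norm_coeff_prod_X_sub_C_mul_pow_le (s : Finset ι) (w : ι → 𝕜) {t : ℝ} (ht : 0 ≤ t) (i : ℕ) :
    ‖(∏ k ∈ s, (X - C (w k))).coeff i‖ * t ^ i ≤ ∏ k ∈ s, (t + ‖w k‖) := by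
  classical
  induction s using Finset.induction_on generalizing i with
  | empty => rcases i with _ | i <;> simp [coeff_one]
  | insert l s hl ih =>
    rw [Finset.prod_insert hl, Finset.prod_insert hl]
    rcases i with _ | i
    · have h := mul_le_mul_of_nonneg_left (ih 0) (norm_nonneg (w l))
      have hpos : 0 ≤ t * ∏ k ∈ s, (t + ‖w k‖) := by positivity
      simp only [mul_coeff_zero, coeff_sub, coeff_X_zero, coeff_C_zero, zero_sub, norm_mul,
        norm_neg, pow_zero, mul_one] at h ⊢
      linarith
    · rw [sub_mul, coeff_sub, coeff_X_mul, coeff_C_mul]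
      set p := ∏ k ∈ s, (X - C (w k))
      calc ‖p.coeff i - w l * p.coeff (i + 1)‖ * t ^ (i + 1)
          ≤ (‖p.coeff i‖ + ‖w l‖ * ‖p.coeff (i + 1)‖) * t ^ (i + 1) := by
            gcongr
            exact (norm_sub_le _ _).trans_eq (by rw [norm_mul])
        _ = t * (‖p.coeff i‖ * t ^ i) + ‖w l‖ * (‖p.coeff (i + 1)‖ * t ^ (i + 1)) := by ring
        _ ≤ t * ∏ k ∈ s, (t + ‖w k‖) + ‖w l‖ * ∏ k ∈ s, (t + ‖w k‖) := by
            gcongr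
            exacts [ih i, ih (i + 1)]
        _ = (t + ‖w l‖) * ∏ k ∈ s, (t + ‖w k‖) := by ring

theorem norm_coeff_lagrange_basis_mul_pow_le [DecidableEq ι] (s : Finset ι) (w : ι → 𝕜) (j : ι)
    {t : ℝ} (ht : 0 ≤ t) (i : ℕ) :
    ‖(Lagrange.basis s w j).coeff i‖ * t ^ i ≤
      (∏ k ∈ s.erase j, (t + ‖w k‖)) / ∏ k ∈ s.erase j, ‖w j - w k‖ := by
  have hbasis : Lagrange.basis s w j =
      C (∏ k ∈ s.erase j, (w j - w k))⁻¹ * ∏ k ∈ s.erase j, (X - C (w k)) := by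
    simp only [Lagrange.basis, Lagrange.basisDivisor, Finset.prod_mul_distrib,
      ← Finset.prod_inv_distrib, map_prod]
  rw [hbasis, coeff_C_mul, norm_mul, norm_inv, norm_prod, mul_assoc, inv_mul_eq_div]
  gcongr
  exact norm_coeff_prod_X_sub_C_mul_pow_le _ w ht i

theorem exp_add_exp_le (u v : ℝ) :
    Real.exp u + Real.exp v ≤ Real.exp (max u v + Real.exp (-|u - v|)) := by
  wlog h : v ≤ u generalizing u v
  · rw [add_comm, max_comm, abs_sub_comm]
    exact this v u (le_of_not_ge h)
  rw [max_eq_left h, abs_of_nonneg (sub_nonneg.mpr h), neg_sub]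
  calc Real.exp u + Real.exp v = Real.exp u * (Real.exp (v - u) + 1) := by
        rw [mul_add, ← Real.exp_add, mul_one, add_sub_cancel, add_comm]
    _ ≤ Real.exp u * Real.exp (Real.exp (v - u)) := by gcongr; exact Real.add_one_le_exp _
    _ = Real.exp (u + Real.exp (v - u)) := (Real.exp_add _ _).symm

theorem exp_max_sub_le_abs_exp_sub_exp {r u v : ℝ} (hr : r < 1) (h : Real.exp (-|u - v|) ≤ r) :
    Real.exp (max u v - Real.exp (-|u - v|) / (1 - r)) ≤ |Real.exp u - Real.exp v| := by
  wlog huv : v ≤ u generalizing u v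
  · rw [max_comm, abs_sub_comm u, abs_sub_comm (Real.exp u)]
    exact this (by rwa [abs_sub_comm]) (le_of_not_ge huv)
  rw [max_eq_left huv, abs_of_nonneg (sub_nonneg.mpr (Real.exp_le_exp.mpr huv))]
  rw [abs_of_nonneg (sub_nonneg.mpr huv), neg_sub] at h ⊢
  set q := Real.exp (v - u)
  have hinv : (1 - q)⁻¹ ≤ Real.exp (q / (1 - r)) := by
    calc (1 - q)⁻¹ = q / (1 - q) + 1 := by field [show 1 - q ≠ 0 by linarith]
      _ ≤ q / (1 - r) + 1 := by gcongr
      _ ≤ Real.exp (q / (1 - r)) := Real.add_one_le_exp _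
  calc Real.exp (u - q / (1 - r)) = Real.exp u * (Real.exp (q / (1 - r)))⁻¹ := by
        rw [sub_eq_add_neg, Real.exp_add, Real.exp_neg (q / (1 - r))]
    _ ≤ Real.exp u * (1 - q) := by
        gcongr
        exact inv_le_of_inv_le₀ (by linarith) hinv
    _ = Real.exp u - Real.exp v := by rw [mul_sub, ← Real.exp_add, mul_one, add_sub_cancel]

theorem norm_coeff_lagrange_basis_mul_exp_le [DecidableEq ι] {s : Finset ι} {w : ι → 𝕜} {u : ι → ℝ}
    (hw : ∀ k, ‖w k‖ = Real.exp (u k)) {j : ι} {r S v : ℝ} (hr : r < 1)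
    (hsep : ∀ k ∈ s.erase j, Real.exp (-|u j - u k|) ≤ r)
    (hj : ∑ k ∈ s.erase j, Real.exp (-|u j - u k|) ≤ S)
    (hv : ∑ k ∈ s.erase j, Real.exp (-|v - u k|) ≤ S) (i : ℕ) :
    ‖(Lagrange.basis s w j).coeff i‖ * Real.exp (i * v) ≤
      Real.exp (S + S / (1 - r)) *
        Real.exp (∑ k ∈ s.erase j, max v (u k) - ∑ k ∈ s.erase j, max (u j) (u k)) := by
  have hnum : ∏ k ∈ s.erase j, (Real.exp v + ‖w k‖) ≤
      Real.exp (∑ k ∈ s.erase j, max v (u k) + S) := by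
    calc ∏ k ∈ s.erase j, (Real.exp v + ‖w k‖)
        ≤ ∏ k ∈ s.erase j, Real.exp (max v (u k) + Real.exp (-|v - u k|)) := by
          gcongr with k
          rw [hw]
          exact exp_add_exp_le v (u k)
      _ ≤ Real.exp (∑ k ∈ s.erase j, max v (u k) + S) := by
          rw [← Real.exp_sum, Finset.sum_add_distrib]
          gcongr
  have hden : Real.exp (∑ k ∈ s.erase j, max (u j) (u k) - S / (1 - r)) ≤
      ∏ k ∈ s.erase j, ‖w j - w k‖ := by
    calc Real.exp (∑ k ∈ s.erase j, max (u j) (u k) - S / (1 - r))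
        ≤ ∏ k ∈ s.erase j, Real.exp (max (u j) (u k) - Real.exp (-|u j - u k|) / (1 - r)) := by
          rw [← Real.exp_sum, Finset.sum_sub_distrib, ← Finset.sum_div]
          gcongr
      _ ≤ ∏ k ∈ s.erase j, ‖w j - w k‖ := by
          gcongr with k hk
          calc _ ≤ |Real.exp (u j) - Real.exp (u k)| :=
                exp_max_sub_le_abs_exp_sub_exp hr (hsep k hk)
            _ ≤ ‖w j - w k‖ := by rw [← hw, ← hw]; exact abs_norm_sub_norm_le _ _
  rw [Real.exp_nat_mul]
  calc ‖(Lagrange.basis s w j).coeff i‖ * Real.exp v ^ i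
      ≤ (∏ k ∈ s.erase j, (Real.exp v + ‖w k‖)) / ∏ k ∈ s.erase j, ‖w j - w k‖ :=
        norm_coeff_lagrange_basis_mul_pow_le s w j (Real.exp_pos v).le i
    _ ≤ Real.exp (∑ k ∈ s.erase j, max v (u k) + S) /
          Real.exp (∑ k ∈ s.erase j, max (u j) (u k) - S / (1 - r)) := by gcongr
    _ = _ := by rw [← Real.exp_sub, ← Real.exp_add]; ring_nf

theorem vandermonde_mul_coeff_lagrange_basis {F : Type*} [Field F] {N : ℕ} {w : ℕ → F}
    (hw : Set.InjOn w (Finset.range N)) :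
    Matrix.vandermonde (fun i : Fin N => w i) *
      Matrix.of (fun i j : Fin N => (Lagrange.basis (Finset.range N) w j).coeff i) = 1 := by
  ext i j
  have hi : (i : ℕ) ∈ Finset.range N := Finset.mem_range.mpr i.isLt
  have hj : (j : ℕ) ∈ Finset.range N := Finset.mem_range.mpr j.isLt
  have hdeg : (Lagrange.basis (Finset.range N) w j).natDegree < N := by
    rw [Lagrange.natDegree_basis hw hj, Finset.card_range]
    exact Nat.sub_one_lt (Nat.ne_zero_of_lt j.isLt)
  have heval : (Matrix.vandermonde (fun i : Fin N => w i) *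
      Matrix.of (fun i j : Fin N => (Lagrange.basis (Finset.range N) w j).coeff i)) i j =
      (Lagrange.basis (Finset.range N) w j).eval (w i) := by
    rw [eval_eq_sum_range' hdeg, Matrix.mul_apply, ← Fin.sum_univ_eq_sum_range]
    simp only [Matrix.vandermonde_apply, Matrix.of_apply, mul_comm]
  rw [heval]
  rcases eq_or_ne i j with rfl | hij
  · rw [Matrix.one_apply_eq, Lagrange.eval_basis_self hw hi]
  · rw [Matrix.one_apply_ne hij,
      Lagrange.eval_basis_of_ne (fun h => hij (Fin.ext h.symm)) hi]

end LagrangeBasis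

section GaussianWindow

variable {x : ℕ → ℝ} {ε D δ C : ℝ}

theorem mul_abs_sub_le_abs_sub (hgap : ∀ k, ε ≤ x (k + 1) - x k) (k l : ℕ) :
    ε * |(k : ℝ) - l| ≤ |x k - x l| := by
  wlog h : l ≤ k generalizing k l
  · rw [abs_sub_comm, abs_sub_comm (x k)]
    exact this l k (le_of_not_ge h)
  have hmono : Monotone fun k : ℕ => x k - ε * k :=
    monotone_nat_of_le_succ fun k => by have := hgap k; push_cast; linarith
  have hle : x l - ε * l ≤ x k - ε * k := hmono h
  rw [abs_of_nonneg (sub_nonneg.mpr (Nat.cast_le.mpr h))]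
  exact le_trans (by linarith) (le_abs_self _)

theorem sum_range_max_eq {u : ℕ → ℝ} (hu : Monotone u) {n N : ℕ} (hn : n ≤ N) :
    ∑ k ∈ Finset.range N, max (u n) (u k) = n * u n + ∑ k ∈ Finset.Ico n N, u k := by
  rw [← Finset.sum_range_add_sum_Ico _ hn]
  congr 1
  · rw [Finset.sum_congr rfl fun k hk => max_eq_left (hu (Finset.mem_range.mp hk).le),
      Finset.sum_const, Finset.card_range, nsmul_eq_mul]
  · exact Finset.sum_congr rfl fun k hk => max_eq_right (hu (Finset.mem_Ico.mp hk).1)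

theorem abs_sum_Ico_sub_sum_Ico_sub_le
    (hmean : ∀ i j, i ≤ j → |∑ k ∈ Finset.Ico i j, (x k - k)| ≤ δ * (j - i) + C)
    {n j N : ℕ} (hn : n ≤ N) (hj : j ≤ N) :
    |∑ k ∈ Finset.Ico n N, x k - ∑ k ∈ Finset.Ico j N, x k -
      ((j : ℝ) * (j - 1) - n * (n - 1)) / 2| ≤ δ * |(n : ℝ) - j| + C := by
  wlog h : n ≤ j generalizing n j
  · rw [abs_sub_comm (n : ℝ), ← abs_neg]
    convert this hj hn (le_of_not_ge h) using 2
    ring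
  have hsum : ∑ k ∈ Finset.Ico n j, (k : ℝ) = ((j : ℝ) * (j - 1) - n * (n - 1)) / 2 := by
    have hrange (m : ℕ) : ∑ k ∈ Finset.range m, (k : ℝ) = m * (m - 1) / 2 := by
      induction m with
      | zero => simp
      | succ m ih => rw [Finset.sum_range_succ, ih]; push_cast; ring
    rw [Finset.sum_Ico_eq_sub _ h, hrange, hrange]
    ring
  rw [← Finset.sum_Ico_consecutive x h hj, add_sub_cancel_right, ← hsum, ← Finset.sum_sub_distrib,
    abs_sub_comm, abs_of_nonneg (sub_nonneg.mpr (Nat.cast_le.mpr h))]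
  exact hmean n j h

theorem two_mul_sum_max_sub_sum_max_le (hx : Monotone x) (hD : ∀ k : ℕ, |x k - k| ≤ D)
    (hmean : ∀ i j, i ≤ j → |∑ k ∈ Finset.Ico i j, (x k - k)| ≤ δ * (j - i) + C)
    {n j N : ℕ} (hn : n < N) (hj : j < N) :
    2 * (∑ k ∈ (Finset.range N).erase j, max (x n) (x k) -
        ∑ k ∈ (Finset.range N).erase j, max (x j) (x k)) - 2 * n * x n + (n ^ 2 + x j ^ 2) ≤
      D ^ 2 + 4 * D + 2 * C - (1 - 2 * δ) * |(n : ℝ) - j| := by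
  have herase (m : ℕ) := Finset.sum_erase_eq_sub (f := fun k => max (x m) (x k))
    (Finset.mem_range.mpr hj)
  have hprim := (abs_le.mp (abs_sum_Ico_sub_sum_Ico_sub_le hmean hn.le hj.le)).2
  have hDn := abs_le.mp (hD n)
  have hDj := abs_le.mp (hD j)
  have hsq : (x j - j) ^ 2 ≤ D ^ 2 := sq_le_sq' hDj.1 hDj.2
  have hmax : |(n : ℝ) - j| + (n - j) - 4 * D ≤ 2 * (max (x n) (x j) - x j) := by
    rcases abs_cases ((n : ℝ) - j) with ⟨h, -⟩ | ⟨h, -⟩ <;>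
      linarith [le_max_left (x n) (x j), le_max_right (x n) (x j)]
  rw [herase, herase, sum_range_max_eq hx hn.le, sum_range_max_eq hx hj.le, max_self]
  linarith

theorem norm_coeff_lagrange_basis_mul_exp_le_of_gap {𝕜 : Type*} [NormedField 𝕜] {w : ℕ → 𝕜}
    {u : ℕ → ℝ} (hw : ∀ k, ‖w k‖ = Real.exp (u k)) (hε : 0 < ε)
    (hgap : ∀ k, ε ≤ u (k + 1) - u k) (n j N : ℕ) :
    ‖(Lagrange.basis (Finset.range N) w j).coeff n‖ * Real.exp (n * u n) ≤
      Real.exp (expDecaySum ε + expDecaySum ε / (1 - Real.exp (-ε))) *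
        Real.exp (∑ k ∈ (Finset.range N).erase j, max (u n) (u k) -
          ∑ k ∈ (Finset.range N).erase j, max (u j) (u k)) := by
  have hdist (m k : ℕ) : -|u m - u k| ≤ -ε * |(k : ℝ) - m| := by
    rw [neg_mul, neg_le_neg_iff, abs_sub_comm (k : ℝ)]
    exact mul_abs_sub_le_abs_sub hgap m k
  have hsum (m : ℕ) :
      ∑ k ∈ (Finset.range N).erase j, Real.exp (-|u m - u k|) ≤ expDecaySum ε :=
    (Finset.sum_le_sum fun k _ => Real.exp_le_exp.mpr (hdist m k)).trans
      (sum_exp_neg_mul_abs_le hε Nat.cast_injective (m : ℤ) _)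
  refine norm_coeff_lagrange_basis_mul_exp_le hw (Real.exp_lt_one_iff.mpr (neg_lt_zero.mpr hε))
    (fun k hk => Real.exp_le_exp.mpr ((hdist j k).trans ?_)) (hsum j) (hsum n) n
  have hne : (k : ℤ) - j ≠ 0 := sub_ne_zero.mpr (mod_cast Finset.ne_of_mem_erase hk)
  have hone : (1 : ℝ) ≤ |(k : ℝ) - j| := by
    have := Int.one_le_abs hne
    exact_mod_cast this
  rw [neg_mul, neg_le_neg_iff]
  exact le_mul_of_one_le_right hε.le hone

theorem exists_norm_coeff_lagrange_basis_cexp_le {c : ℂ} (hc : 0 < c.re) (hε : 0 < ε) (D δ C : ℝ) :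
    ∃ M ≥ 0, ∀ x : ℕ → ℝ, (∀ k, ε ≤ x (k + 1) - x k) → (∀ k : ℕ, |x k - k| ≤ D) →
      (∀ i j, i ≤ j → |∑ k ∈ Finset.Ico i j, (x k - k)| ≤ δ * (j - i) + C) →
      ∀ n j N : ℕ, n < N → j < N →
        ‖(Lagrange.basis (Finset.range N) (fun k => Complex.exp (2 * c * x k)) j).coeff n‖ *
            Real.exp (c.re * (n ^ 2 + x j ^ 2)) ≤
          M * Real.exp (-(c.re * (1 - 2 * δ)) * |(n : ℝ) - j|) := by
  set a := c.re with ha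
  set g := 2 * a * ε
  set M₀ := Real.exp (expDecaySum g + expDecaySum g / (1 - Real.exp (-g)))
  refine ⟨M₀ * Real.exp (a * (D ^ 2 + 4 * D + 2 * C)), by positivity,
    fun x hgap hD hmean n j N hn hj => ?_⟩
  have hx : Monotone x := monotone_nat_of_le_succ fun k => by linarith [hgap k]
  have hexp := two_mul_sum_max_sub_sum_max_le hx hD hmean hn hj
  have hnorm (k : ℕ) : ‖Complex.exp (2 * c * x k)‖ = Real.exp (2 * a * x k) := by
    rw [Complex.norm_exp]
    simp [ha]
  have hmul (m k : ℕ) : max (2 * a * x m) (2 * a * x k) = 2 * a * max (x m) (x k) :=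
    (mul_max_of_nonneg _ _ (by positivity)).symm
  have hcoeff := norm_coeff_lagrange_basis_mul_exp_le_of_gap hnorm (ε := g) (by positivity)
    (fun k => by
      rw [← mul_sub]
      exact mul_le_mul_of_nonneg_left (hgap k) (by positivity)) n j N
  simp only [hmul, ← Finset.mul_sum] at hcoeff
  set b := ‖(Lagrange.basis (Finset.range N) (fun k => Complex.exp (2 * c * x k)) j).coeff n‖
  set A := ∑ k ∈ (Finset.range N).erase j, max (x n) (x k)
  set B := ∑ k ∈ (Finset.range N).erase j, max (x j) (x k)
  calc b * Real.exp (a * (n ^ 2 + x j ^ 2))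
      = b * Real.exp (n * (2 * a * x n)) * Real.exp (a * (n ^ 2 + x j ^ 2 - 2 * n * x n)) := by
        rw [mul_assoc, ← Real.exp_add]; ring_nf
    _ ≤ M₀ * Real.exp (2 * a * A - 2 * a * B) *
          Real.exp (a * (n ^ 2 + x j ^ 2 - 2 * n * x n)) := by gcongr
    _ = M₀ * Real.exp (a * (2 * (A - B) - 2 * n * x n + (n ^ 2 + x j ^ 2))) := by
        rw [mul_assoc, ← Real.exp_add]; ring_nf
    _ ≤ M₀ * Real.exp (a * (D ^ 2 + 4 * D + 2 * C - (1 - 2 * δ) * |(n : ℝ) - j|)) := by gcongr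
    _ = _ := by rw [mul_assoc M₀, ← Real.exp_add (a * _)]; ring_nf

/-- The inverse of the Gaussian matrix `(e^{-c(x_i - j)²})_{i,j<N}`: that matrix is the Vandermonde
matrix of the nodes `e^{2 c x_i}` up to diagonal factors, and Lagrange interpolation inverts it. -/
noncomputable def gaussInverse (c : ℂ) (x : ℕ → ℝ) (N : ℕ) : Matrix (Fin N) (Fin N) ℂ :=
  .of fun n j => Complex.exp (c * (n ^ 2 + x j ^ 2)) *
    (Lagrange.basis (Finset.range N) (fun k => Complex.exp (2 * c * x k)) j).coeff n

theorem gauss_mul_gaussInverse {c : ℂ} (hc : 0 < c.re) (hx : StrictMono x) (N : ℕ) :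
    Matrix.of (fun i j : Fin N => Complex.exp (-c * (x i - j) ^ 2)) * gaussInverse c x N = 1 := by
  have hinj : Function.Injective fun k => Complex.exp (2 * c * x k) := fun k l hkl => by
    have hnorm : Real.exp (2 * c.re * x k) = Real.exp (2 * c.re * x l) := by
      simpa [Complex.norm_exp] using congrArg norm hkl
    exact hx.injective (mul_left_cancel₀ (by positivity) (Real.exp_injective hnorm))
  have hV := vandermonde_mul_coeff_lagrange_basis (N := N) hinj.injOn
  ext i j
  calc _ = Complex.exp (c * (x j ^ 2 - x i ^ 2)) * (1 : Matrix (Fin N) (Fin N) ℂ) i j := by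
        rw [← hV, Matrix.mul_apply, Matrix.mul_apply, Finset.mul_sum]
        refine Finset.sum_congr rfl fun n _ => ?_
        simp only [gaussInverse, Matrix.of_apply, Matrix.vandermonde_apply, ← mul_assoc,
          ← Complex.exp_nat_mul, ← Complex.exp_add]
        ring_nf
    _ = (1 : Matrix (Fin N) (Fin N) ℂ) i j := by
        rcases eq_or_ne i j with rfl | hij
        · simp
        · simp [hij]

end GaussianWindow

section BlockMeans

variable {d : ℤ → ℝ} {N : ℕ} {δ D : ℝ}

theorem abs_sum_range_mul_le (hblock : ∀ m : ℤ, |∑ i ∈ Finset.range N, d (m * N + i)| ≤ δ * N)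
    (m : ℤ) (b : ℕ) : |∑ i ∈ Finset.range (b * N), d (m * N + i)| ≤ δ * (b * N) := by
  induction b with
  | zero => simp
  | succ b ih =>
    have hlast : ∑ i ∈ Finset.range N, d (m * N + (b * N + i : ℕ)) =
        ∑ i ∈ Finset.range N, d ((m + b : ℤ) * N + i) :=
      Finset.sum_congr rfl fun i _ => congrArg d (by push_cast; ring)
    rw [add_mul, one_mul, Finset.sum_range_add, hlast]
    refine (abs_add_le _ _).trans ((add_le_add ih (hblock _)).trans_eq ?_)
    push_cast
    ring

theorem abs_sum_range_le (hD : ∀ n, |d n| ≤ D) (p : ℤ) (n : ℕ) :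
    |∑ i ∈ Finset.range n, d (p + i)| ≤ n * D :=
  calc |∑ i ∈ Finset.range n, d (p + i)| ≤ ∑ i ∈ Finset.range n, |d (p + i)| :=
        Finset.abs_sum_le_sum_abs _ _
    _ ≤ n * D := by simpa using Finset.sum_le_sum fun i (_ : i ∈ Finset.range n) => hD (p + i)

theorem abs_sum_range_le_of_aligned (hD : ∀ n, |d n| ≤ D) (hN : 0 < N)
    (hblock : ∀ m : ℤ, |∑ i ∈ Finset.range N, d (m * N + i)| ≤ δ * N) (m : ℤ) (n : ℕ) :
    |∑ i ∈ Finset.range n, d (m * N + i)| ≤ δ * n + N * D := by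
  have hN' : (0 : ℝ) < N := Nat.cast_pos.mpr hN
  have hδ : 0 ≤ δ := nonneg_of_mul_nonneg_left ((abs_nonneg _).trans (hblock 0)) hN'
  have hD₀ : 0 ≤ D := (abs_nonneg _).trans (hD 0)
  have hsplit : ∑ i ∈ Finset.range n, d (m * N + i) =
      ∑ i ∈ Finset.range (n / N * N), d (m * N + i) +
        ∑ i ∈ Finset.range (n % N), d (m * N + (n / N * N : ℕ) + i) := by
    conv_lhs => rw [← Nat.div_add_mod' n N, Finset.sum_range_add]
    simp only [Nat.cast_add, add_assoc]
  have hquot : ((n / N : ℕ) : ℝ) * N ≤ n := mod_cast Nat.div_mul_le_self n N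
  have hrem : ((n % N : ℕ) : ℝ) ≤ N := mod_cast (Nat.mod_lt n hN).le
  rw [hsplit]
  exact (abs_add_le _ _).trans (add_le_add
    ((abs_sum_range_mul_le hblock m _).trans (by gcongr))
    ((abs_sum_range_le hD _ _).trans (by gcongr)))

theorem exists_abs_sum_range_le (hD : ∀ n, |d n| ≤ D) (hN : 0 < N)
    (hblock : ∀ m : ℤ, |∑ i ∈ Finset.range N, d (m * N + i)| ≤ δ * N) :
    ∃ C, ∀ (p : ℤ) (n : ℕ), |∑ i ∈ Finset.range n, d (p + i)| ≤ δ * n + C := by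
  have hδ : 0 ≤ δ :=
    nonneg_of_mul_nonneg_left ((abs_nonneg _).trans (hblock 0)) (Nat.cast_pos.mpr hN)
  have hD₀ : 0 ≤ D := (abs_nonneg _).trans (hD 0)
  refine ⟨δ * N + 2 * (N * D), fun p n => ?_⟩
  obtain ⟨s, hs⟩ := Int.eq_ofNat_of_zero_le (Int.emod_nonneg p (Nat.cast_ne_zero.mpr hN.ne'))
  have hsN : s ≤ N := by
    have := Int.emod_lt_of_pos p (Nat.cast_pos.mpr hN)
    omega
  have hp : p = p / N * N + s := by rw [← hs, Int.ediv_mul_add_emod]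
  have hdiff : ∑ i ∈ Finset.range n, d (p + i) =
      ∑ i ∈ Finset.range (s + n), d (p / N * N + i) -
        ∑ i ∈ Finset.range s, d (p / N * N + i) := by
    rw [Finset.sum_range_add, add_sub_cancel_left]
    exact Finset.sum_congr rfl fun i _ => congrArg d (by push_cast; omega)
  calc |∑ i ∈ Finset.range n, d (p + i)|
      ≤ (δ * (s + n : ℕ) + N * D) + s * D := by
        rw [hdiff]
        exact (abs_sub _ _).trans
          (add_le_add (abs_sum_range_le_of_aligned hD hN hblock _ _) (abs_sum_range_le hD _ _))
    _ ≤ (δ * (N + n) + N * D) + N * D := by push_cast; gcongr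
    _ = δ * n + (δ * N + 2 * (N * D)) := by ring

end BlockMeans

/-- Avdonin's condition of a perturbation of the integers: `lam` is separated, stays within bounded
distance of the identity, and its displacements have means below `1/2` over the blocks
`[mN, (m+1)N)` of a suitable length `N`. -/
structure IsAvdoninSequence (lam : ℤ → ℝ) : Prop where
  exists_gap : ∃ ε > 0, ∀ n, ε ≤ lam (n + 1) - lam n
  exists_abs_sub_le : ∃ D, ∀ n : ℤ, |lam n - n| ≤ D
  exists_abs_block_sum_le : ∃ N : ℕ, 0 < N ∧ ∃ δ < 1 / 2, ∀ m : ℤ,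
    |∑ i ∈ Finset.range N, (lam (m * N + i) - ↑(m * N + i : ℤ))| ≤ δ * N

namespace IsAvdoninSequence

variable {lam : ℤ → ℝ} {c : ℂ}

theorem strictMono (h : IsAvdoninSequence lam) : StrictMono lam := by
  obtain ⟨ε, hε, hgap⟩ := h.exists_gap
  exact strictMono_int_of_lt_succ fun n => sub_pos.mp (hε.trans_le (hgap n))

theorem exists_norm_cexp_le (h : IsAvdoninSequence lam) (hc : 0 < c.re) :
    ∃ M ≥ 0, ∀ j n : ℤ,
      ‖Complex.exp (-c * (lam j - n) ^ 2)‖ ≤ M * Real.exp (-c.re * |(j : ℝ) - n|) := by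
  obtain ⟨D, hD⟩ := h.exists_abs_sub_le
  refine ⟨Real.exp (c.re * (D + 1 / 4)), by positivity, fun j n => ?_⟩
  have htri : |(j : ℝ) - n| - D ≤ |lam j - n| := by
    linarith [hD j, abs_sub_comm (lam j) j, abs_sub_le (j : ℝ) (lam j) n]
  have hsq : |lam j - n| ≤ (lam j - n) ^ 2 + 1 / 4 := by
    nlinarith [sq_nonneg (|lam j - n| - 1 / 2), sq_abs (lam j - n)]
  have hre : (-c * (lam j - n : ℂ) ^ 2).re = -c.re * (lam j - n) ^ 2 := by
    have hcast : (lam j - n : ℂ) ^ 2 = ((lam j - n) ^ 2 : ℝ) := by push_cast; rfl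
    rw [hcast, Complex.re_mul_ofReal, Complex.neg_re]
  rw [Complex.norm_exp, hre, ← Real.exp_add]
  gcongr
  nlinarith

theorem exists_gaussInverse_le (h : IsAvdoninSequence lam) (hc : 0 < c.re) :
    ∃ κ > 0, ∃ M ≥ 0, ∀ (p : ℤ) (N : ℕ) (n j : Fin N),
      ‖gaussInverse c (fun k => lam (p + k) - p) N n j‖ ≤
        M * Real.exp (-κ * |((n : ℕ) : ℝ) - (j : ℕ)|) := by
  obtain ⟨ε, hε, hgap⟩ := h.exists_gap
  obtain ⟨D, hD⟩ := h.exists_abs_sub_le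
  obtain ⟨N₀, hN₀, δ, hδ, hblock⟩ := h.exists_abs_block_sum_le
  obtain ⟨C, hC⟩ := exists_abs_sum_range_le (d := fun n => lam n - n) hD hN₀ hblock
  obtain ⟨M, hM, hbound⟩ := exists_norm_coeff_lagrange_basis_cexp_le hc hε D δ C
  refine ⟨c.re * (1 - 2 * δ), mul_pos hc (by linarith), M, hM, fun p N n j => ?_⟩
  set x : ℕ → ℝ := fun k => lam (p + k) - p with hx
  have hdisp (k : ℕ) : x k - k = lam (p + k) - (p + k : ℤ) := by simp only [hx]; push_cast; ring
  have hre : (c * ((n : ℕ) ^ 2 + x j ^ 2)).re = c.re * ((n : ℕ) ^ 2 + x j ^ 2) := by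
    have hcast : ((n : ℕ) ^ 2 + x j ^ 2 : ℂ) = ((n : ℕ) ^ 2 + x j ^ 2 : ℝ) := by push_cast; rfl
    rw [hcast, Complex.re_mul_ofReal]
  have hxgap (k : ℕ) : ε ≤ x (k + 1) - x k := by
    simpa only [hx, Nat.cast_add, Nat.cast_one, ← add_assoc, sub_sub_sub_cancel_right] using
      hgap (p + k)
  have hxmean (i j : ℕ) (hij : i ≤ j) :
      |∑ k ∈ Finset.Ico i j, (x k - k)| ≤ δ * (j - i) + C := by
    have := hC (p + i) (j - i)
    rw [Nat.cast_sub hij] at this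
    simpa only [Finset.sum_Ico_eq_sum_range, hdisp, Nat.cast_add, ← add_assoc] using this
  have := hbound x hxgap (fun k => by rw [hdisp]; exact hD _) hxmean n j N n.isLt j.isLt
  rw [gaussInverse, Matrix.of_apply, norm_mul, Complex.norm_exp, hre, mul_comm]
  exact this

end IsAvdoninSequence

section SamplingOperator

variable {ι : Type*} {c : ℂ} {lam : ι → ℝ} {T : ℓ²(ℤ, ℂ) →L[ℂ] ℓ²(ι, ℂ)}

theorem memℓp_two_iff {E : ι → Type*} [∀ i, NormedAddCommGroup (E i)] {f : ∀ i, E i} :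
    Memℓp f 2 ↔ Summable fun i => ‖f i‖ ^ 2 := by
  simpa using memℓp_gen_iff (p := 2) (f := f) (by norm_num)

theorem lp_norm_sq_eq_tsum {E : ι → Type*} [∀ i, NormedAddCommGroup (E i)] (f : lp E 2) :
    ‖f‖ ^ 2 = ∑' i, ‖f i‖ ^ 2 := by
  simpa using lp.norm_rpow_eq_tsum (p := 2) (by norm_num) f

theorem isSamplingV2_range (hlam : Function.Injective lam)
    (hT : ∀ f j, T f j = gaussShiftSum c f (lam j)) {M : ℝ} (hM : ∀ f, ‖f‖ ≤ M * ‖T f‖) :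
    IsSamplingV2 c (Set.range lam) := by
  refine ⟨1 / (M ^ 2 + 1), by positivity, ‖T‖ ^ 2 + 1, by positivity, fun coef hcoef => ?_⟩
  obtain ⟨f, rfl⟩ : ∃ f : ℓ²(ℤ, ℂ), ⇑f = coef := ⟨⟨coef, memℓp_two_iff.mpr hcoef⟩, rfl⟩
  have hvalues : ∑' x : Set.range lam, ‖gaussShiftSum c f x‖ ^ 2 = ‖T f‖ ^ 2 := by
    rw [tsum_range (fun x => ‖gaussShiftSum c f x‖ ^ 2) hlam, lp_norm_sq_eq_tsum]
    simp only [hT]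
  rw [hvalues, ← lp_norm_sq_eq_tsum, div_mul_eq_mul_div, one_mul, div_le_iff₀ (by positivity)]
  have hlower := pow_le_pow_left₀ (norm_nonneg f) (hM f) 2
  have hupper := pow_le_pow_left₀ (norm_nonneg (T f)) (T.le_opNorm f) 2
  constructor <;> nlinarith [sq_nonneg ‖f‖, sq_nonneg ‖T f‖]

theorem isInterpolatingV2_range (hlam : Function.Injective lam)
    (hT : ∀ f j, T f j = gaussShiftSum c f (lam j)) (hsurj : Function.Surjective T) :
    IsInterpolatingV2 c (Set.range lam) := by
  intro a ha
  let e := Equiv.ofInjective lam hlam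
  obtain ⟨f, hf⟩ := hsurj ⟨fun j => a (e j), memℓp_two_iff.mpr (e.summable_iff.mpr ha)⟩
  refine ⟨f, memℓp_two_iff.mp (lp.memℓp f), fun x => ?_⟩
  obtain ⟨j, rfl⟩ := e.surjective x
  exact (hT f j).symm.trans (congrFun (congrArg Subtype.val hf) j)

end SamplingOperator

namespace IsAvdoninSequence

open scoped Matrix.Norms.L2Operator

variable {lam : ℤ → ℝ} {c : ℂ} {T : ℓ²(ℤ, ℂ) →L[ℂ] ℓ²(ℤ, ℂ)}

theorem exists_samplingOperator (h : IsAvdoninSequence lam) (hc : 0 < c.re) :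
    ∃ T : ℓ²(ℤ, ℂ) →L[ℂ] ℓ²(ℤ, ℂ), ∀ f j, T f j = gaussShiftSum c f (lam j) := by
  obtain ⟨M, hM, hdecay⟩ := h.exists_norm_cexp_le hc
  obtain ⟨T, hT⟩ := exists_clm_apply_eq_tsum_mul_of_norm_le_exp hM hc Function.injective_id hdecay
  exact ⟨T, fun f j => (hT f j).trans (tsum_congr fun n => mul_comm _ _)⟩

theorem gaussInverse_mul_finiteSection (h : IsAvdoninSequence lam) (hc : 0 < c.re)
    (hT : ∀ f j, T f j = gaussShiftSum c f (lam j)) (p : ℤ) (N : ℕ) :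
    gaussInverse c (fun k => lam (p + k) - p) N * finiteSection T (fun i : Fin N => p + i) = 1 := by
  have hsection : finiteSection T (fun i : Fin N => p + i) =
      .of fun i j : Fin N => Complex.exp (-c * ((lam (p + i) - p : ℝ) - j) ^ 2) := by
    ext i j
    have hsingle : ∀ n ≠ p + j, (lp.single 2 (p + j : ℤ) (1 : ℂ) : ℓ²(ℤ, ℂ)) n *
        Complex.exp (-c * (lam (p + i) - n) ^ 2) = 0 := fun n hn => by simp [hn]
    rw [finiteSection, Matrix.of_apply, Matrix.of_apply, hT, gaussShiftSum,
      tsum_eq_single _ hsingle]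
    simp [sub_sub]
  have hmono : StrictMono fun k : ℕ => lam (p + k) - p := fun k l hkl =>
    sub_lt_sub_right (h.strictMono (by omega)) _
  rw [hsection]
  exact mul_eq_one_comm.mp (gauss_mul_gaussInverse hc hmono N)

theorem exists_hasStableSections (h : IsAvdoninSequence lam) (hc : 0 < c.re)
    (hT : ∀ f j, T f j = gaussShiftSum c f (lam j)) : ∃ M, HasStableSections T M := by
  obtain ⟨κ, hκ, M, hM, hdecay⟩ := h.exists_gaussInverse_le hc
  refine ⟨M * expDecaySum κ, fun s => ?_⟩
  obtain ⟨p, hp⟩ := s.bddBelow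
  obtain ⟨q, hq⟩ := s.bddAbove
  let e : Fin (q - p + 1).toNat ↪ ℤ := ⟨fun i => p + i, fun i j hij => by simp_all [Fin.ext_iff]⟩
  refine ⟨_, e, _, fun n hn => ?_, h.gaussInverse_mul_finiteSection hc hT p _, ?_⟩
  · have hpn : p ≤ n := hp hn
    have hnq : n ≤ q := hq hn
    exact ⟨⟨(n - p).toNat, by omega⟩, show p + ((n - p).toNat : ℤ) = n by omega⟩
  · have hcast : Function.Injective fun i : Fin (q - p + 1).toNat => ((i : ℕ) : ℤ) :=
      Nat.cast_injective.comp Fin.val_injective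
    exact l2_opNorm_le_of_norm_le_exp hM hκ hcast fun n j => mod_cast hdecay p _ n j

theorem isCompleteInterpolatingV2_range (h : IsAvdoninSequence lam) (hc : 0 < c.re) :
    IsCompleteInterpolatingV2 c (Set.range lam) := by
  obtain ⟨T, hT⟩ := h.exists_samplingOperator hc
  obtain ⟨M, hM⟩ := h.exists_hasStableSections hc hT
  exact ⟨isSamplingV2_range h.strictMono.injective hT hM.norm_le,
    isInterpolatingV2_range h.strictMono.injective hT hM.surjective⟩

end IsAvdoninSequence

theorem IsInterpolatingV2.mono {c : ℂ} {Λ Λ' : Set ℝ} (h : IsInterpolatingV2 c Λ')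
    (hsub : Λ ⊆ Λ') : IsInterpolatingV2 c Λ := by
  intro a ha
  have hinj := Set.inclusion_injective hsub
  let a' : Λ' → ℂ := Function.extend (Set.inclusion hsub) a 0
  have ha' (x : Λ) : a' (Set.inclusion hsub x) = a x := hinj.extend_apply a 0 x
  obtain ⟨coef, hcoef, hval⟩ := h a' <|
    (hinj.summable_iff fun y hy => by simp [a', Function.extend_apply' _ _ _ hy]).mp
      (ha.congr fun x => by rw [Function.comp_apply, ha'])
  exact ⟨coef, hcoef, fun x => (hval (Set.inclusion hsub x)).trans (ha' x)⟩

section Density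

variable {Λ : Set ℝ} {ε : ℝ}

theorem injOn_floor_div (hε : 0 < ε) (hsep : ∀ x ∈ Λ, ∀ y ∈ Λ, x ≠ y → ε ≤ |x - y|) :
    Set.InjOn (fun y => ⌊y / ε⌋) Λ := by
  intro x hx y hy hxy
  by_contra hne
  have hlt : |x / ε - y / ε| < 1 := Int.abs_sub_lt_one_of_floor_eq_floor hxy
  rw [← sub_div, abs_div, abs_of_pos hε, div_lt_one hε] at hlt
  exact hlt.not_ge (hsep x hx y hy hne)

theorem mapsTo_floor_div (hε : 0 < ε) (x r : ℝ) :
    Set.MapsTo (fun y => ⌊y / ε⌋) (Λ ∩ Set.Icc x (x + r))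
      (Finset.Icc ⌊x / ε⌋ ⌊(x + r) / ε⌋) := by
  rintro y ⟨-, hxy, hyr⟩
  rw [Finset.mem_coe, Finset.mem_Icc]
  exact ⟨Int.floor_mono (by gcongr), Int.floor_mono (by gcongr)⟩

theorem IsSeparatedSet.finite_inter_Icc (h : IsSeparatedSet Λ) (x r : ℝ) :
    (Λ ∩ Set.Icc x (x + r)).Finite := by
  obtain ⟨ε, hε, hsep⟩ := h
  exact .of_injOn (mapsTo_floor_div hε x r) ((injOn_floor_div hε hsep).mono Set.inter_subset_left)
    (Finset.finite_toSet _)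

theorem IsSeparatedSet.exists_ncard_le (h : IsSeparatedSet Λ) :
    ∃ C ≥ 0, ∀ x, ∀ r ≥ 0, ((Λ ∩ Set.Icc x (x + r)).ncard : ℝ) ≤ C * r + 2 := by
  obtain ⟨ε, hε, hsep⟩ := h
  refine ⟨1 / ε, by positivity, fun x r hr => ?_⟩
  have hcard := Set.ncard_le_ncard_of_injOn _ (mapsTo_floor_div hε x r)
    ((injOn_floor_div hε hsep).mono Set.inter_subset_left) (Finset.finite_toSet _)
  rw [Set.ncard_coe_finset, Int.card_Icc] at hcard
  have hfloor : ⌊x / ε⌋ ≤ ⌊(x + r) / ε⌋ + 1 := by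
    have : ⌊x / ε⌋ ≤ ⌊(x + r) / ε⌋ := by gcongr; linarith
    omega
  calc ((Λ ∩ Set.Icc x (x + r)).ncard : ℝ)
      ≤ ((⌊(x + r) / ε⌋ + 1 - ⌊x / ε⌋).toNat : ℤ) := mod_cast hcard
    _ = ⌊(x + r) / ε⌋ + 1 - ⌊x / ε⌋ := by
        rw [Int.toNat_of_nonneg (by omega)]
        push_cast
        rfl
    _ ≤ 1 / ε * r + 2 := by
        have := Int.floor_le ((x + r) / ε)
        have := Int.lt_floor_add_one (x / ε)
        rw [add_div] at *
        rw [div_mul_eq_mul_div, one_mul]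
        linarith

theorem IsSeparatedSet.exists_ncard_le_of_upperBeurlingDensity_lt (h : IsSeparatedSet Λ) {θ : ℝ}
    (hθ : 0 ≤ θ) (hdens : upperBeurlingDensity Λ < θ) :
    ∃ A, ∀ x, ∀ r ≥ 0, ((Λ ∩ Set.Icc x (x + r)).ncard : ℝ) ≤ θ * r + A := by
  obtain ⟨C, hC, hcount⟩ := h.exists_ncard_le
  have hbounded : IsBoundedUnder (· ≤ ·) atTop
      fun r : ℝ => (⨆ x : ℝ, ((Λ ∩ Set.Icc x (x + r)).ncard : ℝ)) / r := by
    refine ⟨C + 2, eventually_map.mpr ?_⟩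
    filter_upwards [eventually_ge_atTop (1 : ℝ)] with r hr
    rw [div_le_iff₀ (by positivity)]
    exact (ciSup_le fun x => hcount x r (by positivity)).trans (by linarith)
  obtain ⟨R, hR⟩ := eventually_atTop.mp (eventually_lt_of_limsup_lt hdens hbounded)
  refine ⟨C * max R 1 + 2, fun x r hr => ?_⟩
  rcases le_total r (max R 1) with hrR | hrR
  · calc _ ≤ C * r + 2 := hcount x r hr
      _ ≤ C * max R 1 + 2 := by gcongr
      _ ≤ _ := le_add_of_nonneg_left (by positivity)
  · have hr₀ : 0 < r := zero_lt_one.trans_le ((le_max_right R 1).trans hrR)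
    have hsup := hR r ((le_max_left R 1).trans hrR)
    rw [div_lt_iff₀ hr₀] at hsup
    have hbdd : BddAbove (Set.range fun x : ℝ => ((Λ ∩ Set.Icc x (x + r)).ncard : ℝ)) :=
      ⟨C * r + 2, Set.forall_mem_range.mpr fun x => hcount x r hr⟩
    exact ((le_ciSup hbdd x).trans hsup.le).trans (le_add_of_nonneg_right (by positivity))

end Density

section Counting

variable {α : Type*} {S : Finset α} {f : α → ℝ} {θ A : ℝ}

theorem card_mul_card_add_one_le
    (hcount : ∀ y ∈ S, ((S.filter fun z => f z ≤ f y).card : ℝ) ≤ θ * f y + A) :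
    (S.card * (S.card + 1) / 2 : ℝ) ≤ θ * ∑ y ∈ S, f y + A * S.card := by
  classical
  induction S using Finset.induction_on_max_value f with
  | empty => simp
  | insert a s ha hmax ih =>
    have hs : (s.card * (s.card + 1) / 2 : ℝ) ≤ θ * ∑ y ∈ s, f y + A * s.card := by
      refine ih fun y hy => le_trans ?_ (hcount y (Finset.mem_insert_of_mem hy))
      gcongr
      exact Finset.subset_insert a s
    have hlast := hcount a (Finset.mem_insert_self a s)
    rw [Finset.filter_true_of_mem (by simpa using hmax), Finset.card_insert_of_notMem ha] at hlast
    rw [Finset.sum_insert ha, Finset.card_insert_of_notMem ha]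
    push_cast at hlast ⊢
    linarith

theorem mul_sum_sub_le
    (hcount : ∀ y ∈ S, ((S.filter fun z => f z ≤ f y).card : ℝ) ≤ θ * f y + A) (L : ℝ) :
    θ * ∑ y ∈ S, (L - f y) ≤ (θ * L + A) ^ 2 / 2 := by
  have := card_mul_card_add_one_le hcount
  rw [Finset.sum_sub_distrib, Finset.sum_const, nsmul_eq_mul]
  nlinarith [sq_nonneg (θ * L + A - S.card), (Nat.cast_nonneg S.card : (0 : ℝ) ≤ S.card)]

end Counting

section BlockFilling

theorem card_le_card_filter_le_dist_add_card {α : Type*} [PseudoMetricSpace α]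
    {C : Finset α} {ρ : ℝ} (hC : ∀ x ∈ C, ∀ y ∈ C, x ≠ y → 2 * ρ ≤ dist x y) (S : Finset α) :
    C.card ≤ (C.filter fun x => ∀ y ∈ S, ρ ≤ dist x y).card + S.card := by
  rw [← Finset.card_filter_add_card_filter_not (s := C)
    fun x => ∀ y ∈ S, ρ ≤ dist x y]
  refine Nat.add_le_add_left ?_ _
  refine Finset.card_le_card_of_forall_subsingleton (fun x y => dist x y < ρ)
    (fun x hx => ?_) fun y _ x hx x' hx' => ?_
  · simpa using (Finset.mem_filter.mp hx).2
  · by_contra hne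
    have := hC x (Finset.mem_filter.mp hx.1).1 x' (Finset.mem_filter.mp hx'.1).1 hne
    linarith [dist_triangle_right x x' y, hx.2, hx'.2]

theorem exists_card_eq_separated_from (S : Finset ℝ) (t : ℝ) {ρ : ℝ} (hρ : 0 < ρ) (K : ℕ) :
    ∃ A : Finset ℝ, A.card = K ∧
      (∀ x ∈ A, x ∈ Set.Icc (t + ρ) (t + 2 * ρ * (K + S.card : ℕ) - ρ)) ∧
      (∀ x ∈ A, ∀ y ∈ S, ρ ≤ |x - y|) ∧ ∀ x ∈ A, ∀ y ∈ A, x ≠ y → 2 * ρ ≤ |x - y| := by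
  let x (i : ℕ) : ℝ := t + ρ * (2 * i + 1)
  let C := (Finset.range (K + S.card)).image x
  have hgap {i j : ℕ} (hij : i ≠ j) : 2 * ρ ≤ |x i - x j| := by
    have hone : 1 ≤ |(i : ℤ) - j| := Int.one_le_abs (sub_ne_zero.mpr (Int.ofNat_inj.not.mpr hij))
    have hone' : (1 : ℝ) ≤ |(i : ℝ) - j| := by exact_mod_cast hone
    have hdiff : x i - x j = 2 * ρ * (i - j) := by ring
    rw [hdiff, abs_mul, abs_of_pos (by positivity)]
    exact le_mul_of_one_le_right (by positivity) hone'
  have hC : ∀ y ∈ C, ∀ z ∈ C, y ≠ z → 2 * ρ ≤ |y - z| := by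
    simp only [C, Finset.forall_mem_image]
    exact fun i _ j _ hij => hgap fun h => hij (congrArg x h)
  have hcard : C.card = K + S.card := by
    rw [Finset.card_image_of_injective, Finset.card_range]
    exact fun i j hij => by simpa [x, hρ.ne'] using hij
  have hgood := card_le_card_filter_le_dist_add_card hC S
  rw [hcard, Nat.add_le_add_iff_right] at hgood
  obtain ⟨A, hA, hAcard⟩ := Finset.exists_subset_card_eq hgood
  have hAC : A ⊆ C := hA.trans (Finset.filter_subset _ _)
  refine ⟨A, hAcard, fun y hy => ?_, fun y hy => (Finset.mem_filter.mp (hA hy)).2,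
    fun y hy z hz => hC y (hAC hy) z (hAC hz)⟩
  obtain ⟨i, hi, rfl⟩ := Finset.mem_image.mp (hAC hy)
  have hi' : (i : ℝ) + 1 ≤ (K + S.card : ℕ) := by exact_mod_cast Finset.mem_range.mp hi
  constructor <;> simp only [x] <;> nlinarith [(Nat.cast_nonneg i : (0 : ℝ) ≤ i)]

/-- `F` completes the points of `Λ` in the block `[b, b + N)` to `N` points which are `ρ`-separated
and have nearly the mean of `b, b + 1, …, b + N - 1`. The added points keep distance `ρ` from the
endpoints of the block, so that neighbouring blocks can be filled independently. -/
structure IsBlockFilling (Λ : Set ℝ) (N : ℕ) (ρ b : ℝ) (F : Finset ℝ) : Prop where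
  card_eq : F.card = N
  mem_Ico : ∀ y ∈ F, y ∈ Set.Ico b (b + N)
  mem_of_mem : ∀ y ∈ Λ, y ∈ Set.Ico b (b + N) → y ∈ F
  mem_or_mem_Icc : ∀ y ∈ F, y ∈ Λ ∨ y ∈ Set.Icc (b + ρ) (b + N - ρ)
  pairwise_le_abs_sub : (F : Set ℝ).Pairwise fun x y => ρ ≤ |x - y|
  abs_sum_sub_le : |∑ y ∈ F, (y - b) - N * (N - 1) / 2| ≤ 1 / 4 * N

variable {Λ : Set ℝ} {θ A : ℝ} {N : ℕ} {b : ℝ} {S : Finset ℝ}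

theorem card_filter_le_of_ncard_le
    (hcount : ∀ x, ∀ r ≥ 0, ((Λ ∩ Set.Icc x (x + r)).ncard : ℝ) ≤ θ * r + A)
    (hfin : ∀ x r, (Λ ∩ Set.Icc x (x + r)).Finite) (hS : ↑S ⊆ Λ) {p : ℝ → Prop} [DecidablePred p]
    {x r : ℝ} (hr : 0 ≤ r) (hp : ∀ y ∈ S, p y → y ∈ Set.Icc x (x + r)) :
    ((S.filter p).card : ℝ) ≤ θ * r + A := by
  have hsub : ↑(S.filter p) ⊆ Λ ∩ Set.Icc x (x + r) := fun y hy => by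
    obtain ⟨hyS, hyp⟩ := Finset.mem_filter.mp (Finset.mem_coe.mp hy)
    exact ⟨hS hyS, hp y hyS hyp⟩
  refine le_trans ?_ (hcount x r hr)
  rw [← Set.ncard_coe_finset]
  exact mod_cast Set.ncard_le_ncard hsub (hfin x r)

theorem card_lt_of_ncard_le (hθ₀ : 0 < θ) (hθ₁ : θ < 1)
    (hcount : ∀ x, ∀ r ≥ 0, ((Λ ∩ Set.Icc x (x + r)).ncard : ℝ) ≤ θ * r + A)
    (hfin : ∀ x r, (Λ ∩ Set.Icc x (x + r)).Finite) (hN : 0 < N)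
    (hNA : (θ * N + A) ^ 2 ≤ θ * (N * (N - 1))) (hS : ↑S ⊆ Λ ∩ Set.Ico b (b + N)) :
    S.card < N := by
  have hN₁ : (1 : ℝ) ≤ N := mod_cast hN
  have hcard := card_filter_le_of_ncard_le hcount hfin (fun y hy => (hS hy).1)
    (p := fun _ => True) (Nat.cast_nonneg N) fun y hy _ => ⟨(hS hy).2.1, (hS hy).2.2.le⟩
  rw [Finset.filter_true_of_mem fun _ _ => trivial] at hcard
  have hlt : θ * N + A < N :=
    lt_of_pow_lt_pow_left₀ 2 (by positivity) (hNA.trans_lt (by nlinarith))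
  exact mod_cast hcard.trans_lt hlt

theorem sum_sub_mem_Icc_of_ncard_le (hθ₀ : 0 < θ)
    (hcount : ∀ x, ∀ r ≥ 0, ((Λ ∩ Set.Icc x (x + r)).ncard : ℝ) ≤ θ * r + A)
    (hfin : ∀ x r, (Λ ∩ Set.Icc x (x + r)).Finite)
    (hNA : (θ * N + A) ^ 2 ≤ θ * (N * (N - 1))) (hS : ↑S ⊆ Λ ∩ Set.Ico b (b + N)) :
    ∑ y ∈ S, (y - b) ∈ Set.Icc (S.card * (N : ℝ) - N * (N - 1) / 2) (N * (N - 1) / 2) := by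
  have hSΛ : ↑S ⊆ Λ := fun y hy => (hS hy).1
  have hSb (y) (hy : y ∈ S) : b ≤ y ∧ y < b + N := (hS hy).2
  have hright := mul_sum_sub_le (f := fun y => b + N - y) (L := N) (θ := θ) (A := A) (S := S)
    fun y hy => card_filter_le_of_ncard_le hcount hfin hSΛ (x := y) (by linarith [hSb y hy])
      fun z hz hzy => ⟨by linarith, by linarith [hSb z hz]⟩
  have hleft := mul_sum_sub_le (f := fun y => y - b) (L := N) (θ := θ) (A := A) (S := S)
    fun y hy => card_filter_le_of_ncard_le hcount hfin hSΛ (x := b) (by linarith [hSb y hy])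
      fun z hz hzy => ⟨(hSb z hz).1, by linarith⟩
  have hreflect : ∑ y ∈ S, ((N : ℝ) - (b + N - y)) = ∑ y ∈ S, (y - b) :=
    Finset.sum_congr rfl fun _ _ => by ring
  rw [hreflect] at hright
  rw [Finset.sum_sub_distrib, Finset.sum_const, nsmul_eq_mul] at hleft
  have hlower : S.card * (N : ℝ) - ∑ y ∈ S, (y - b) ≤ N * (N - 1) / 2 :=
    le_of_mul_le_mul_left (by linarith) hθ₀
  exact ⟨by linarith, le_of_mul_le_mul_left (by linarith) hθ₀⟩

theorem exists_mean_of_ncard_le (hθ₀ : 0 < θ) (hθ₁ : θ < 1)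
    (hcount : ∀ x, ∀ r ≥ 0, ((Λ ∩ Set.Icc x (x + r)).ncard : ℝ) ≤ θ * r + A)
    (hfin : ∀ x r, (Λ ∩ Set.Icc x (x + r)).Finite) (hN : 0 < N)
    (hNA : (θ * N + A) ^ 2 ≤ θ * (N * (N - 1))) (hS : ↑S ⊆ Λ ∩ Set.Ico b (b + N)) :
    S.card < N ∧ ∃ τ ∈ Set.Icc (0 : ℝ) (N - 1),
      ∑ y ∈ S, (y - b) + (N - S.card) * τ = N * (N - 1) / 2 := by
  have hcard : S.card < N := card_lt_of_ncard_le hθ₀ hθ₁ hcount hfin hN hNA hS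
  obtain ⟨hlower, hupper⟩ := sum_sub_mem_Icc_of_ncard_le hθ₀ hcount hfin hNA hS
  have hpos : (0 : ℝ) < N - S.card := sub_pos.mpr (mod_cast hcard)
  refine ⟨hcard, (N * (N - 1) / 2 - ∑ y ∈ S, (y - b)) / (N - S.card), ⟨?_, ?_⟩, ?_⟩
  · exact div_nonneg (sub_nonneg.mpr hupper) hpos.le
  · rw [div_le_iff₀ hpos]
    nlinarith [(Nat.cast_nonneg S.card : (0 : ℝ) ≤ S.card)]
  · rw [mul_div_cancel₀ _ hpos.ne', add_sub_cancel]

theorem abs_sum_disjUnion_sub_le {S P : Finset ℝ} (hdisj : Disjoint S P) {b τ m η : ℝ}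
    (hmean : ∑ y ∈ S, (y - b) + P.card * τ = m) (hP : ∀ y ∈ P, |y - (b + τ)| ≤ η) :
    |∑ y ∈ S.disjUnion P hdisj, (y - b) - m| ≤ η * P.card := by
  have hshift : ∑ y ∈ S.disjUnion P hdisj, (y - b) - m = ∑ y ∈ P, (y - (b + τ)) := by
    rw [Finset.sum_disjUnion, ← hmean]
    simp only [Finset.sum_sub_distrib, Finset.sum_const, nsmul_eq_mul]
    ring
  calc |∑ y ∈ S.disjUnion P hdisj, (y - b) - m|
      ≤ ∑ y ∈ P, |y - (b + τ)| := hshift ▸ Finset.abs_sum_le_sum_abs _ _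
    _ ≤ ∑ _y ∈ P, η := Finset.sum_le_sum hP
    _ = η * P.card := by rw [Finset.sum_const, nsmul_eq_mul, mul_comm]

theorem exists_isBlockFilling (hθ₀ : 0 < θ) (hθ₁ : θ < 1)
    (hcount : ∀ x, ∀ r ≥ 0, ((Λ ∩ Set.Icc x (x + r)).ncard : ℝ) ≤ θ * r + A)
    (hfin : ∀ x r, (Λ ∩ Set.Icc x (x + r)).Finite) (hN : 0 < N)
    (hNA : (θ * N + A) ^ 2 ≤ θ * (N * (N - 1))) {ρ : ℝ} (hρ : 0 < ρ) (hρN : 2 * ρ * N ≤ 1 / 4)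
    (hsep : ∀ x ∈ Λ, ∀ y ∈ Λ, x ≠ y → ρ ≤ |x - y|) (b : ℝ) :
    ∃ F, IsBlockFilling Λ N ρ b F := by
  have hIco : (Λ ∩ Set.Ico b (b + N)).Finite :=
    (hfin b N).subset (Set.inter_subset_inter_right _ Set.Ico_subset_Icc_self)
  obtain ⟨S, hS⟩ := hIco.exists_finset_coe
  obtain ⟨hcard, τ, ⟨hτ₀, hτN⟩, hmean⟩ :=
    exists_mean_of_ncard_le hθ₀ hθ₁ hcount hfin hN hNA hS.subset
  obtain ⟨P, hPcard, hPIcc, hPS, hPP⟩ :=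
    exists_card_eq_separated_from S (b + τ) hρ (N - S.card)
  rw [Nat.sub_add_cancel hcard.le] at hPIcc
  have hSmem (y) (hy : y ∈ S) : y ∈ Λ ∧ y ∈ Set.Ico b (b + N) := hS.subset hy
  have hPmem (y) (hy : y ∈ P) : y ∈ Set.Icc (b + ρ) (b + N - ρ) := by
    obtain ⟨h₁, h₂⟩ := hPIcc y hy
    exact ⟨by linarith, by linarith⟩
  have hdisj : Disjoint S P := Finset.disjoint_left.mpr fun y hyS hyP => by
    simpa [hρ.not_ge] using hPS y hyP y hyS
  refine ⟨S.disjUnion P hdisj, ?_, ?_, ?_, ?_, ?_, ?_⟩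
  · rw [Finset.card_disjUnion, hPcard, Nat.add_sub_cancel' hcard.le]
  · intro y hy
    rcases Finset.mem_disjUnion.mp hy with hy | hy
    · exact (hSmem y hy).2
    · exact ⟨by linarith [(hPmem y hy).1], by linarith [(hPmem y hy).2]⟩
  · exact fun y hyΛ hy => Finset.mem_disjUnion.mpr (.inl (hS.superset ⟨hyΛ, hy⟩))
  · exact fun y hy => (Finset.mem_disjUnion.mp hy).imp (fun h => (hSmem y h).1) (hPmem y)
  · have : Std.Symm fun x y : ℝ => ρ ≤ |x - y| := ⟨fun x y h => by rwa [abs_sub_comm]⟩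
    rw [Finset.coe_disjUnion, Set.pairwise_union_of_symm]
    exact ⟨fun x hx y hy => hsep x (hSmem x hx).1 y (hSmem y hy).1,
      fun x hx y hy hxy => by linarith [hPP x hx y hy hxy],
      fun x hx y hy _ => (hPS y hy x hx).trans_eq (abs_sub_comm y x)⟩
  · have hP (y) (hy : y ∈ P) : |y - (b + τ)| ≤ 1 / 4 := by
      obtain ⟨h₁, h₂⟩ := hPIcc y hy
      exact abs_le.mpr ⟨by linarith, by linarith⟩
    refine (abs_sum_disjUnion_sub_le hdisj ?_ hP).trans ?_
    · rw [hPcard, Nat.cast_sub hcard.le, hmean]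
    · gcongr
      omega

end BlockFilling

section BlockEnumeration

variable {Λ : Set ℝ} {N : ℕ} {ρ : ℝ} {F : ℤ → Finset ℝ}

/-- The enumeration of the points of `⋃ m, F m` which lists the `N` points of `F m` in increasing
order at the indices `mN, …, mN + N - 1`. -/
noncomputable def blockEnum [NeZero N] (hF : ∀ m, (F m).card = N) (n : ℤ) : ℝ :=
  (F (Int.divModEquiv N n).1).orderEmbOfFin (hF _) (Int.divModEquiv N n).2

theorem blockEnum_mul_add [NeZero N] (hF : ∀ m, (F m).card = N) (m : ℤ) (i : Fin N) :
    blockEnum hF (m * N + i) = (F m).orderEmbOfFin (hF m) i := by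
  have hmi : Int.divModEquiv N (m * N + i) = (m, i) :=
    (Int.divModEquiv N).apply_symm_apply (m, i)
  simp only [blockEnum, hmi]

theorem exists_blockEnum_eq [NeZero N] (hF : ∀ m, (F m).card = N) (n : ℤ) :
    ∃ (m : ℤ) (i : Fin N), n = m * N + i ∧ blockEnum hF n = (F m).orderEmbOfFin (hF m) i :=
  ⟨_, _, ((Int.divModEquiv N).symm_apply_apply n).symm, rfl⟩

theorem mem_range_blockEnum [NeZero N] (hF : ∀ m, (F m).card = N) {x : ℝ} {m : ℤ} (hx : x ∈ F m) :
    x ∈ Set.range (blockEnum hF) := by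
  rw [← Finset.mem_coe, ← Finset.range_orderEmbOfFin (F m) (hF m)] at hx
  obtain ⟨i, rfl⟩ := hx
  exact ⟨m * N + i, blockEnum_mul_add hF m i⟩

theorem sum_blockEnum_sub [NeZero N] (hF : ∀ m, (F m).card = N) (m : ℤ) :
    ∑ i ∈ Finset.range N, (blockEnum hF (m * N + i) - ↑(m * N + i : ℤ)) =
      ∑ y ∈ F m, (y - m * N) - N * (N - 1) / 2 := by
  have hvalues : ∑ i : Fin N, blockEnum hF (m * N + i) = ∑ y ∈ F m, y := by
    simp only [blockEnum_mul_add]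
    conv_rhs => rw [← Finset.image_orderEmbOfFin_univ (F m) (hF m)]
    rw [Finset.sum_image fun i _ j _ hij => ((F m).orderEmbOfFin (hF m)).injective hij]
  have hindices : ∑ i ∈ Finset.range N, (i : ℝ) = N * (N - 1) / 2 := by
    have := congrArg (Nat.cast (R := ℝ)) (Finset.sum_range_id_mul_two N)
    push_cast [Nat.cast_pred (NeZero.pos N)] at this
    linarith
  rw [Finset.sum_sub_distrib, Finset.sum_sub_distrib, ← hvalues,
    Finset.sum_range fun i => blockEnum hF (m * N + i)]
  push_cast
  rw [Finset.sum_add_distrib, hindices]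
  simp only [Finset.sum_const, Finset.card_range, nsmul_eq_mul, hF]
  ring

namespace IsBlockFilling

theorem lt_of_block_lt (hF : ∀ m : ℤ, IsBlockFilling Λ N ρ (m * N) (F m)) {x y : ℝ} {m m' : ℤ}
    (hx : x ∈ F m) (hy : y ∈ F m') (hmm' : m < m') : x < y := by
  have hsucc : (m : ℝ) + 1 ≤ m' := mod_cast hmm'
  calc x < m * N + N := ((hF m).mem_Ico x hx).2
    _ = (m + 1) * N := by ring
    _ ≤ m' * N := by gcongr
    _ ≤ y := ((hF m').mem_Ico y hy).1

theorem le_sub_of_lt (hF : ∀ m : ℤ, IsBlockFilling Λ N ρ (m * N) (F m))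
    (hsep : ∀ x ∈ Λ, ∀ y ∈ Λ, x ≠ y → ρ ≤ |x - y|) {x y : ℝ} {m m' : ℤ}
    (hx : x ∈ F m) (hy : y ∈ F m') (hxy : x < y) : ρ ≤ y - x := by
  rw [← abs_of_pos (sub_pos.mpr hxy), abs_sub_comm]
  rcases lt_trichotomy m m' with hmm' | rfl | hmm'
  · have hsucc : (m : ℝ) + 1 ≤ m' := mod_cast hmm'
    have hblocks : (m : ℝ) * N + N ≤ m' * N :=
      (add_one_mul (m : ℝ) (N : ℝ)).symm.trans_le (by gcongr)
    have hx' := ((hF m).mem_Ico x hx).2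
    have hy' := ((hF m').mem_Ico y hy).1
    have hle : y - x ≤ |x - y| := (le_abs_self _).trans_eq (abs_sub_comm _ _)
    rcases (hF m).mem_or_mem_Icc x hx with hxΛ | ⟨-, hxρ⟩
    · rcases (hF m').mem_or_mem_Icc y hy with hyΛ | ⟨hyρ, -⟩
      · exact hsep x hxΛ y hyΛ hxy.ne
      · linarith
    · linarith
  · exact (hF m).pairwise_le_abs_sub hx hy hxy.ne
  · exact absurd hxy (lt_of_block_lt hF hy hx hmm').not_gt

theorem blockEnum_lt_succ [NeZero N] (hF : ∀ m : ℤ, IsBlockFilling Λ N ρ (m * N) (F m)) (n : ℤ) :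
    blockEnum (fun m => (hF m).card_eq) n < blockEnum (fun m => (hF m).card_eq) (n + 1) := by
  obtain ⟨m, i, hn, hval⟩ := exists_blockEnum_eq (fun m => (hF m).card_eq) n
  obtain ⟨m', j, hn', hval'⟩ := exists_blockEnum_eq (fun m => (hF m).card_eq) (n + 1)
  rw [hval, hval']
  rcases lt_trichotomy m m' with hmm' | rfl | hmm'
  · exact lt_of_block_lt hF (Finset.orderEmbOfFin_mem _ _ i) (Finset.orderEmbOfFin_mem _ _ j) hmm'
  · exact (OrderEmbedding.lt_iff_lt _).mpr (Fin.lt_def.mpr (by omega))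
  · nlinarith [j.isLt]

theorem isAvdoninSequence_blockEnum [NeZero N]
    (hF : ∀ m : ℤ, IsBlockFilling Λ N ρ (m * N) (F m)) (hρ : 0 < ρ)
    (hsep : ∀ x ∈ Λ, ∀ y ∈ Λ, x ≠ y → ρ ≤ |x - y|) :
    IsAvdoninSequence (blockEnum fun m => (hF m).card_eq) where
  exists_gap := by
    refine ⟨ρ, hρ, fun n => ?_⟩
    have hlt := blockEnum_lt_succ hF n
    obtain ⟨m, i, -, hval⟩ := exists_blockEnum_eq (fun m => (hF m).card_eq) n
    obtain ⟨m', j, -, hval'⟩ := exists_blockEnum_eq (fun m => (hF m).card_eq) (n + 1)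
    rw [hval, hval'] at hlt ⊢
    exact le_sub_of_lt hF hsep (Finset.orderEmbOfFin_mem _ _ i) (Finset.orderEmbOfFin_mem _ _ j)
      hlt
  exists_abs_sub_le := by
    refine ⟨N, fun n => ?_⟩
    obtain ⟨m, i, rfl, hval⟩ := exists_blockEnum_eq (fun m => (hF m).card_eq) n
    obtain ⟨hlower, hupper⟩ := (hF m).mem_Ico _ (Finset.orderEmbOfFin_mem _ (hF m).card_eq i)
    have hi : ((i : ℕ) : ℝ) < N := mod_cast i.isLt
    rw [hval, abs_le]
    push_cast
    constructor <;> linarith [(Nat.cast_nonneg i : (0 : ℝ) ≤ (i : ℕ))]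
  exists_abs_block_sum_le := by
    refine ⟨N, NeZero.pos N, 1 / 4, by norm_num, fun m => ?_⟩
    rw [sum_blockEnum_sub]
    exact (hF m).abs_sum_sub_le

end IsBlockFilling

end BlockEnumeration

theorem exists_nat_sq_mul_add_le {θ : ℝ} (hθ₀ : 0 < θ) (hθ₁ : θ < 1) (A : ℝ) :
    ∃ N : ℕ, 0 < N ∧ (θ * N + A) ^ 2 ≤ θ * (N * (N - 1)) := by
  have hpos : 0 < θ * (1 - θ) := mul_pos hθ₀ (sub_pos.mpr hθ₁)
  obtain ⟨N, hN⟩ := exists_nat_ge (max 1 ((2 * θ * A + θ + A ^ 2) / (θ * (1 - θ))))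
  obtain ⟨hN₁, hNA⟩ := max_le_iff.mp hN
  rw [div_le_iff₀ hpos] at hNA
  refine ⟨N, Nat.cast_pos.mp (zero_lt_one.trans_le hN₁), ?_⟩
  nlinarith [mul_le_mul_of_nonneg_right hNA (Nat.cast_nonneg N), sq_nonneg A]

theorem exists_isAvdoninSequence_superset {Λ : Set ℝ} (hsep : IsSeparatedSet Λ)
    (hdens : upperBeurlingDensity Λ < 1) :
    ∃ lam, IsAvdoninSequence lam ∧ Λ ⊆ Set.range lam := by
  obtain ⟨θ, hθ, hθ₁⟩ := exists_between (max_lt hdens one_pos)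
  obtain ⟨hdensθ, hθ₀⟩ := max_lt_iff.mp hθ
  obtain ⟨A, hcount⟩ := hsep.exists_ncard_le_of_upperBeurlingDensity_lt hθ₀.le hdensθ
  obtain ⟨N, hN, hNA⟩ := exists_nat_sq_mul_add_le hθ₀ hθ₁ A
  have : NeZero N := ⟨hN.ne'⟩
  obtain ⟨ε, hε, hsepε⟩ := id hsep
  obtain ⟨ρ, hρ, hρε, hρN⟩ : ∃ ρ > 0, ρ ≤ ε ∧ 2 * ρ * N ≤ 1 / 4 := by
    refine ⟨min ε (1 / (8 * N)), by positivity, min_le_left _ _, ?_⟩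
    calc 2 * min ε (1 / (8 * N)) * N ≤ 2 * (1 / (8 * N)) * N := by gcongr; exact min_le_right _ _
      _ = 1 / 4 := by field_simp; norm_num
  have hsepρ : ∀ x ∈ Λ, ∀ y ∈ Λ, x ≠ y → ρ ≤ |x - y| := fun x hx y hy hxy =>
    hρε.trans (hsepε x hx y hy hxy)
  have hfill (m : ℤ) : ∃ F, IsBlockFilling Λ N ρ (m * N) F :=
    exists_isBlockFilling hθ₀ hθ₁ hcount hsep.finite_inter_Icc hN hNA hρ hρN hsepρ _
  choose F hF using hfill
  refine ⟨_, IsBlockFilling.isAvdoninSequence_blockEnum hF hρ hsepρ, fun x hx => ?_⟩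
  refine mem_range_blockEnum _ ((hF ⌊x / N⌋).mem_of_mem x hx ?_)
  have hN' : (0 : ℝ) < N := Nat.cast_pos.mpr hN
  rw [Set.mem_Ico, ← add_one_mul, ← le_div_iff₀ hN', ← div_lt_iff₀ hN']
  exact ⟨Int.floor_le _, Int.lt_floor_add_one _⟩

theorem statement3_general (c : ℂ) (hc : 0 < c.re) (Λ : Set ℝ)
    (hsep : IsSeparatedSet Λ) (hdens : upperBeurlingDensity Λ < 1) :
    IsInterpolatingV2 c Λ ∧ ∃ Λ' : Set ℝ, Λ ⊆ Λ' ∧ IsCompleteInterpolatingV2 c Λ' := by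
  obtain ⟨lam, hlam, hsub⟩ := exists_isAvdoninSequence_superset hsep hdens
  have hcomplete : IsCompleteInterpolatingV2 c (Set.range lam) :=
    hlam.isCompleteInterpolatingV2_range hc
  exact ⟨hcomplete.2.mono hsub, Set.range lam, hsub, hcomplete⟩

/-- every separated `Λ ⊂ ℝ` with `D⁺(Λ) < 1` is interpolating for `V²_a`
and can be enlarged to a complete interpolating sequence for `V²_a`. -/
theorem statement3 (a : ℝ) (ha : 0 < a) (Λ : Set ℝ)
    (hsep : IsSeparatedSet Λ) (hdens : upperBeurlingDensity Λ < 1) :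
    IsInterpolatingV2 (a : ℂ) Λ ∧
      ∃ Λ' : Set ℝ, Λ ⊆ Λ' ∧ IsCompleteInterpolatingV2 (a : ℂ) Λ' :=
  statement3_general a (by simpa using ha) Λ hsep hdens
end

section
/- Let a > 0. If a sequence Λ ⊂ ℝ is interpolating for the Gaussian shift-invariant space V²_a, then Λ is separated and its upper Beurling density satisfies D⁺(Λ) ≤ 1. -/
open Filter MeasureTheory

open scoped lp InnerProductSpace ComplexConjugate Finset

/-!
Interpolation says that the reproducing vectors `k_λ = (conj φ(λ - n))_n`, `λ ∈ Λ`, solve every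
square summable moment problem in `ℓ²(ℤ)`. The open mapping theorem turns this into a lower bound
`∑ |b_λ|² ≤ C ‖∑ b_λ k_λ‖²`. Testing it on `k_λ - k_μ` keeps these vectors apart, and since
`x ↦ k_x` is uniformly continuous, the points `λ` are separated. For the density, a combination of
the `k_λ` with `λ ∈ [x, y]` that vanishes at the integers within distance `R` of `[x, y]` only
retains the tails of `φ`, so by Schur's test its norm violates the lower bound once `R` is large.
The vectors restricted to these integers are therefore linearly independent, whence
`#(Λ ∩ [x, y]) ≤ y - x + O(1)`.
-/

section RieszFischer

variable {𝕜 E ι : Type*} [RCLike 𝕜] [NormedAddCommGroup E] [InnerProductSpace 𝕜 E]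

variable (𝕜) in
/-- A Riesz–Fischer family in an inner product space: the moment problem `⟪v i, f⟫ = y i` has a
solution for all square summable data `y`. -/
def IsRieszFischer (v : ι → E) : Prop :=
  ∀ y : ι → 𝕜, Summable (fun i => ‖y i‖ ^ 2) → ∃ f : E, ∀ i, ⟪v i, f⟫_𝕜 = y i

namespace IsRieszFischer

variable [CompleteSpace E] {v : ι → E}

/- The solutions form a closed subspace of `E × ℓ²(ι, 𝕜)`, and the open mapping theorem applies to
its projection onto the data. -/
lemma exists_solution_norm_le (hv : IsRieszFischer 𝕜 v) :
    ∃ C > 0, ∀ y : ℓ²(ι, 𝕜), ∃ f : E, (∀ i, ⟪v i, f⟫_𝕜 = y i) ∧ ‖f‖ ≤ C * ‖y‖ := by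
  let defect (i : ι) : E × ℓ²(ι, 𝕜) →L[𝕜] 𝕜 :=
    (innerSL 𝕜 (v i)).comp (.fst 𝕜 E ℓ²(ι, 𝕜)) -
      (lp.evalCLM 𝕜 (fun _ => 𝕜) 2 i).comp (.snd 𝕜 E ℓ²(ι, 𝕜))
  let G : Submodule 𝕜 (E × ℓ²(ι, 𝕜)) := ⨅ i, (defect i).ker
  have mem_G (p : E × ℓ²(ι, 𝕜)) : p ∈ G ↔ ∀ i, ⟪v i, p.1⟫_𝕜 = p.2 i := by
    simp only [G, Submodule.mem_iInf]
    exact forall_congr' fun i => sub_eq_zero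
  have isClosed_G : IsClosed (G : Set (E × ℓ²(ι, 𝕜))) := by
    simp only [G, Submodule.coe_iInf]
    exact isClosed_iInter fun i => (defect i).isClosed_ker
  have : CompleteSpace G := isClosed_G.completeSpace_coe
  let data : G →L[𝕜] ℓ²(ι, 𝕜) := (ContinuousLinearMap.snd 𝕜 E ℓ²(ι, 𝕜)).comp G.subtypeL
  have surjective_data : Function.Surjective data := fun y => by
    obtain ⟨f, hf⟩ := hv y (by simpa using (lp.memℓp y).summable (by norm_num))
    exact ⟨⟨(f, y), (mem_G _).mpr hf⟩, rfl⟩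
  obtain ⟨C, hC, hdata⟩ := data.exists_preimage_norm_le surjective_data
  refine ⟨C, hC, fun y => ?_⟩
  obtain ⟨⟨p, hp⟩, rfl, hnorm⟩ := hdata y
  exact ⟨p.1, (mem_G p).mp hp, (norm_fst_le p).trans hnorm⟩

theorem exists_sum_norm_sq_le (hv : IsRieszFischer 𝕜 v) :
    ∃ C > 0, ∀ (t : Finset ι) (b : ι → 𝕜),
      ∑ i ∈ t, ‖b i‖ ^ 2 ≤ C * ‖∑ i ∈ t, b i • v i‖ ^ 2 := by
  classical
  obtain ⟨C, hC, hsolve⟩ := hv.exists_solution_norm_le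
  refine ⟨C ^ 2, by positivity, fun t b => ?_⟩
  let y : ℓ²(ι, 𝕜) := ∑ i ∈ t, lp.single 2 i (b i)
  have norm_y : ‖y‖ ^ 2 = ∑ i ∈ t, ‖b i‖ ^ 2 := by
    simpa using lp.norm_sum_single (p := 2) (by norm_num) b t
  have y_apply (i : ι) (hi : i ∈ t) : y i = b i := by
    simp only [y, lp.coeFn_sum, lp.coeFn_single, Finset.sum_apply, Finset.sum_pi_single, if_pos hi]
  obtain ⟨f, hf, norm_f⟩ := hsolve y
  have inner_eq : ⟪∑ i ∈ t, b i • v i, f⟫_𝕜 = ((‖y‖ ^ 2 : ℝ) : 𝕜) := by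
    rw [norm_y, sum_inner, RCLike.ofReal_sum]
    refine Finset.sum_congr rfl fun i hi => ?_
    rw [inner_smul_left, hf, y_apply i hi, RCLike.conj_mul, RCLike.ofReal_pow]
  have sq_le : ‖y‖ * ‖y‖ ≤ C * ‖∑ i ∈ t, b i • v i‖ * ‖y‖ :=
    calc ‖y‖ * ‖y‖ = ‖⟪∑ i ∈ t, b i • v i, f⟫_𝕜‖ := by
          rw [inner_eq, RCLike.norm_ofReal, abs_of_nonneg (by positivity), sq]
      _ ≤ ‖∑ i ∈ t, b i • v i‖ * ‖f‖ := norm_inner_le_norm _ _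
      _ ≤ ‖∑ i ∈ t, b i • v i‖ * (C * ‖y‖) := by gcongr
      _ = C * ‖∑ i ∈ t, b i • v i‖ * ‖y‖ := by ring
  have norm_y_le : ‖y‖ ≤ C * ‖∑ i ∈ t, b i • v i‖ := by
    rcases (norm_nonneg y).eq_or_lt with hy | hy
    · rw [← hy]; positivity
    · exact le_of_mul_le_mul_right sq_le hy
  rw [← norm_y, ← mul_pow]
  gcongr

lemma exists_pos_le_norm_sub (hv : IsRieszFischer 𝕜 v) :
    ∃ δ > 0, ∀ i j, i ≠ j → δ ≤ ‖v i - v j‖ := by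
  classical
  obtain ⟨C, hC, hlower⟩ := hv.exists_sum_norm_sq_le
  refine ⟨√(2 / C), by positivity, fun i j hij => Real.sqrt_le_iff.mpr ⟨norm_nonneg _, ?_⟩⟩
  rw [div_le_iff₀' hC]
  calc (2 : ℝ) = ∑ l ∈ {i, j}, ‖if l = i then (1 : 𝕜) else -1‖ ^ 2 := by
        rw [Finset.sum_pair hij, if_pos rfl, if_neg hij.symm]; norm_num
    _ ≤ C * ‖∑ l ∈ {i, j}, (if l = i then (1 : 𝕜) else -1) • v l‖ ^ 2 := hlower _ _
    _ = C * ‖v i - v j‖ ^ 2 := by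
        rw [Finset.sum_pair hij, if_pos rfl, if_neg hij.symm, one_smul, neg_one_smul,
          sub_eq_add_neg]

theorem isSeparatedSet {k : ℝ → E} {Λ : Set ℝ} (hΛ : IsRieszFischer 𝕜 fun z : Λ => k z)
    (hk : UniformContinuous k) : IsSeparatedSet Λ := by
  obtain ⟨δ, hδ, hlower⟩ := hΛ.exists_pos_le_norm_sub
  obtain ⟨ε, hε, hclose⟩ := Metric.uniformContinuous_iff.mp hk δ hδ
  refine ⟨ε, hε, fun x hx y hy hxy => ?_⟩
  by_contra! hlt
  have hdist := hclose hlt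
  rw [dist_eq_norm] at hdist
  exact (hlower ⟨x, hx⟩ ⟨y, hy⟩ (by simpa using hxy)).not_gt hdist

end IsRieszFischer

end RieszFischer

section SchurTest

variable {ι κ : Type*}

lemma sum_norm_sum_mul_sq_le {R : Type*} [SeminormedRing R] {s : Finset ι} {t : Finset κ}
    {A : ι → κ → R} {p q : ℝ} (hp : 0 ≤ p) (hrow : ∀ i ∈ s, ∑ j ∈ t, ‖A i j‖ ≤ p)
    (hcol : ∀ j ∈ t, ∑ i ∈ s, ‖A i j‖ ≤ q) (b : κ → R) :
    ∑ i ∈ s, ‖∑ j ∈ t, b j * A i j‖ ^ 2 ≤ p * q * ∑ j ∈ t, ‖b j‖ ^ 2 := by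
  have cauchy_schwarz (i : ι) :
      ‖∑ j ∈ t, b j * A i j‖ ^ 2 ≤ (∑ j ∈ t, ‖A i j‖) * ∑ j ∈ t, ‖A i j‖ * ‖b j‖ ^ 2 :=
    calc ‖∑ j ∈ t, b j * A i j‖ ^ 2 ≤ (∑ j ∈ t, ‖b j * A i j‖) ^ 2 := by
          gcongr; exact norm_sum_le _ _
      _ ≤ (∑ j ∈ t, ‖A i j‖ * ‖b j‖) ^ 2 := by
          gcongr with j
          exact (norm_mul_le _ _).trans_eq (mul_comm _ _)
      _ ≤ _ := Finset.sum_sq_le_sum_mul_sum_of_sq_le_mul t (fun _ _ => by positivity)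
          (fun _ _ => by positivity) fun j _ => le_of_eq (by ring)
  calc ∑ i ∈ s, ‖∑ j ∈ t, b j * A i j‖ ^ 2
      ≤ ∑ i ∈ s, p * ∑ j ∈ t, ‖A i j‖ * ‖b j‖ ^ 2 := by
        gcongr with i hi
        refine (cauchy_schwarz i).trans ?_
        gcongr
        exact hrow i hi
    _ = p * ∑ j ∈ t, (∑ i ∈ s, ‖A i j‖) * ‖b j‖ ^ 2 := by
        rw [← Finset.mul_sum, Finset.sum_comm]
        simp only [Finset.sum_mul]
    _ ≤ p * ∑ j ∈ t, q * ‖b j‖ ^ 2 := by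
        gcongr with j hj
        exact hcol j hj
    _ = p * q * ∑ j ∈ t, ‖b j‖ ^ 2 := by rw [← Finset.mul_sum, mul_assoc]

lemma l2_norm_sq_le_of_forall_sum_le {G : ι → Type*} [∀ i, NormedAddCommGroup (G i)]
    {f : lp G 2} {B : ℝ} (hB : ∀ s : Finset ι, ∑ i ∈ s, ‖f i‖ ^ 2 ≤ B) : ‖f‖ ^ 2 ≤ B := by
  have norm_sq : ‖f‖ ^ 2 = ∑' i, ‖f i‖ ^ 2 := by
    simpa using lp.norm_rpow_eq_tsum (p := 2) (by norm_num) f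
  rw [norm_sq]
  exact Real.tsum_le_of_sum_le (fun _ => by positivity) hB

lemma l2_norm_sum_smul_sq_le {𝕜 : Type*} [RCLike 𝕜] {v : κ → ℓ²(ι, 𝕜)} {t : Finset κ}
    {b : κ → 𝕜} {M : Finset ι} {p q : ℝ} (hp : 0 ≤ p) (hzero : ∀ i ∈ M, ∑ j ∈ t, b j * v j i = 0)
    (hrow : ∀ i, ∑ j ∈ t, ‖v j i‖ ≤ p)
    (hcol : ∀ j ∈ t, ∀ s : Finset ι, Disjoint s M → ∑ i ∈ s, ‖v j i‖ ≤ q) :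
    ‖∑ j ∈ t, b j • v j‖ ^ 2 ≤ p * q * ∑ j ∈ t, ‖b j‖ ^ 2 := by
  classical
  refine l2_norm_sq_le_of_forall_sum_le fun s => ?_
  calc ∑ i ∈ s, ‖(∑ j ∈ t, b j • v j) i‖ ^ 2 = ∑ i ∈ s, ‖∑ j ∈ t, b j * v j i‖ ^ 2 := by
        simp only [lp.coeFn_sum, Finset.sum_apply, lp.coeFn_smul, Pi.smul_apply, smul_eq_mul]
    _ = ∑ i ∈ s \ M, ‖∑ j ∈ t, b j * v j i‖ ^ 2 := by
        refine (Finset.sum_subset Finset.sdiff_subset fun i hi hiM => ?_).symm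
        rw [hzero i (by simpa [hi] using hiM), norm_zero, zero_pow two_ne_zero]
    _ ≤ p * q * ∑ j ∈ t, ‖b j‖ ^ 2 :=
        sum_norm_sum_mul_sq_le hp (fun i _ => hrow i)
          (fun j hj => hcol j hj _ Finset.sdiff_disjoint) b

end SchurTest

section WienerAmalgam

variable {F ι : Type*} [SeminormedAddCommGroup F] {φ : ℝ → F}

/-- The Wiener amalgam space `W(L^∞, ℓ¹)`: the suprema of `‖φ‖` over the intervals `[k, k + 1)`,
`k ∈ ℤ`, are finite and summable. This is expressed by a summable majorant of these suprema. -/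
def MemWienerAmalgam (φ : ℝ → F) : Prop :=
  ∃ m : ℤ → ℝ, Summable m ∧ ∀ x, ‖φ x‖ ≤ m ⌊x⌋

lemma sum_norm_le_mul_sum_image_floor {m : ℤ → ℝ} (hm : ∀ x, ‖φ x‖ ≤ m ⌊x⌋) {s : Finset ι}
    {p : ι → ℝ} {N : ℕ} (hN : ∀ k : ℤ, #{i ∈ s | ⌊p i⌋ = k} ≤ N) :
    ∑ i ∈ s, ‖φ (p i)‖ ≤ N * ∑ k ∈ s.image fun i => ⌊p i⌋, m k := by
  have m_nonneg (k : ℤ) : 0 ≤ m k := by simpa using (norm_nonneg _).trans (hm k)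
  calc ∑ i ∈ s, ‖φ (p i)‖ ≤ ∑ i ∈ s, m ⌊p i⌋ := Finset.sum_le_sum fun i _ => hm (p i)
    _ = ∑ k ∈ s.image fun i => ⌊p i⌋, #{i ∈ s | ⌊p i⌋ = k} * m k := by
        simp only [Finset.sum_comp m, nsmul_eq_mul]
    _ ≤ ∑ k ∈ s.image fun i => ⌊p i⌋, N * m k := by
        gcongr with k
        · exact m_nonneg k
        · exact hN k
    _ = N * ∑ k ∈ s.image fun i => ⌊p i⌋, m k := (Finset.mul_sum _ _ _).symm

lemma card_filter_floor_sub_intCast_le_one (x : ℝ) (s : Finset ℤ) (k : ℤ) :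
    #{n ∈ s | ⌊x - ((n : ℤ) : ℝ)⌋ = k} ≤ 1 := by
  simp only [Finset.card_le_one, Finset.mem_filter, Int.floor_sub_intCast]
  omega

lemma IsSeparatedSet.exists_card_filter_floor_le {Λ : Set ℝ} (hΛ : IsSeparatedSet Λ) :
    ∃ N : ℕ, ∀ (y : ℝ) (t : Finset Λ) (k : ℤ), #{z ∈ t | ⌊((z : Λ) : ℝ) - y⌋ = k} ≤ N := by
  obtain ⟨ε, hε, hsep⟩ := hΛ
  refine ⟨#(Finset.Icc 0 ⌊1 / ε⌋), fun y t k => ?_⟩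
  refine Finset.card_le_card_of_injOn (fun z => ⌊Int.fract ((z : ℝ) - y) / ε⌋) ?_ ?_
  · intro z _
    have fract_lt := (Int.fract_lt_one ((z : ℝ) - y)).le
    simp only [Finset.coe_Icc, Set.mem_Icc]
    exact ⟨Int.floor_nonneg.mpr (div_nonneg (Int.fract_nonneg _) hε.le),
      Int.floor_le_floor (by gcongr)⟩
  · intro z hz w hw hzw
    simp only [Finset.coe_filter, Set.mem_ofPred_eq] at hz hw
    by_contra hne
    have hlt := Int.abs_sub_lt_one_of_floor_eq_floor hzw
    have fract_sub : Int.fract ((z : ℝ) - y) - Int.fract ((w : ℝ) - y) = z - w := by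
      rw [Int.fract, Int.fract, hz.2, hw.2]; ring
    rw [← sub_div, fract_sub, abs_div, abs_of_pos hε, div_lt_one hε] at hlt
    exact (hsep z z.2 w w.2 (Subtype.coe_ne_coe.mpr hne)).not_gt hlt

namespace MemWienerAmalgam

lemma exists_sum_norm_le (hφ : MemWienerAmalgam φ) (N : ℕ) :
    ∃ D, 0 ≤ D ∧ ∀ (s : Finset ι) (p : ι → ℝ), (∀ k : ℤ, #{i ∈ s | ⌊p i⌋ = k} ≤ N) →
      ∑ i ∈ s, ‖φ (p i)‖ ≤ D := by
  obtain ⟨m, hsum, hm⟩ := hφ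
  have m_nonneg (k : ℤ) : 0 ≤ m k := by simpa using (norm_nonneg _).trans (hm k)
  refine ⟨N * ∑' k, m k, mul_nonneg N.cast_nonneg (tsum_nonneg m_nonneg), fun s p hN => ?_⟩
  refine (sum_norm_le_mul_sum_image_floor hm hN).trans ?_
  gcongr
  exact hsum.sum_le_tsum _ fun k _ => m_nonneg k

lemma exists_sum_norm_sub_intCast_le (hφ : MemWienerAmalgam φ) :
    ∃ D, 0 ≤ D ∧ ∀ (x : ℝ) (s : Finset ℤ), ∑ n ∈ s, ‖φ (x - n)‖ ≤ D := by
  obtain ⟨D, hD, hbound⟩ := hφ.exists_sum_norm_le (ι := ℤ) 1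
  exact ⟨D, hD, fun x s => hbound s _ (card_filter_floor_sub_intCast_le_one x s)⟩

lemma exists_sum_norm_sub_le_of_isSeparatedSet (hφ : MemWienerAmalgam φ) {Λ : Set ℝ}
    (hΛ : IsSeparatedSet Λ) :
    ∃ D, 0 ≤ D ∧ ∀ (y : ℝ) (t : Finset Λ), ∑ z ∈ t, ‖φ (z - y)‖ ≤ D := by
  obtain ⟨N, hN⟩ := hΛ.exists_card_filter_floor_le
  obtain ⟨D, hD, hbound⟩ := hφ.exists_sum_norm_le (ι := Λ) N
  exact ⟨D, hD, fun y t => hbound t _ (hN y t)⟩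

lemma exists_sum_norm_sub_intCast_tail_lt (hφ : MemWienerAmalgam φ) {ε : ℝ} (hε : 0 < ε) :
    ∃ R : ℕ, ∀ (x : ℝ) (s : Finset ℤ), (∀ n ∈ s, (R : ℤ) < |⌊x⌋ - n|) →
      ∑ n ∈ s, ‖φ (x - n)‖ < ε := by
  obtain ⟨m, hsum, hm⟩ := hφ
  obtain ⟨T, hT⟩ := summable_iff_vanishing_norm.mp hsum ε hε
  refine ⟨T.sup Int.natAbs, fun x s hs => ?_⟩
  have disjoint_T : Disjoint (s.image fun n : ℤ => ⌊x - (n : ℝ)⌋) T := by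
    simp only [Finset.disjoint_left, Finset.mem_image, Int.floor_sub_intCast]
    rintro _ ⟨n, hn, rfl⟩ hmem
    have hle : (⌊x⌋ - n).natAbs ≤ T.sup Int.natAbs := Finset.le_sup hmem
    have hlt := hs n hn
    rw [Int.abs_eq_natAbs] at hlt
    omega
  calc ∑ n ∈ s, ‖φ (x - n)‖ ≤ (1 : ℕ) * ∑ k ∈ s.image fun n : ℤ => ⌊x - (n : ℝ)⌋, m k :=
        sum_norm_le_mul_sum_image_floor hm (card_filter_floor_sub_intCast_le_one x s)
    _ ≤ ‖∑ k ∈ s.image fun n : ℤ => ⌊x - (n : ℝ)⌋, m k‖ := by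
        rw [Nat.cast_one, one_mul]; exact Real.le_norm_self _
    _ < ε := hT _ disjoint_T

lemma tendsto_zero_cocompact (hφ : MemWienerAmalgam φ) :
    Tendsto φ (cocompact ℝ) (nhds 0) := by
  obtain ⟨m, hsum, hm⟩ := hφ
  have floor_tendsto : Tendsto (Int.floor : ℝ → ℤ) (cocompact ℝ) cofinite := by
    rw [cocompact_eq_atBot_atTop, Int.cofinite_eq]
    exact tendsto_floor_atBot.sup_sup tendsto_floor_atTop
  exact squeeze_zero_norm hm (hsum.tendsto_cofinite_zero.comp floor_tendsto)

end MemWienerAmalgam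

end WienerAmalgam

section ShiftInvariantSpace

variable {𝕜 : Type*} [RCLike 𝕜] {φ : ℝ → 𝕜} {Λ : Set ℝ}

/-- The generic element `∑_{n∈ℤ} coef n · φ(x - n)` of the shift-invariant space `V²(φ)` generated
by `φ`. -/
noncomputable def shiftSum (φ : ℝ → 𝕜) (coef : ℤ → 𝕜) (x : ℝ) : 𝕜 :=
  ∑' n : ℤ, coef n * φ (x - n)

/-- Interpolating sets for the shift-invariant space `V²(φ)`: all `ℓ²` data on `Λ` are the values
of some `f ∈ V²(φ)`. For the Gaussian `φ(x) = e^{-cx²}` this is `IsInterpolatingV2 c`. -/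
def IsInterpolatingShift (φ : ℝ → 𝕜) (Λ : Set ℝ) : Prop :=
  ∀ a : Λ → 𝕜, Summable (fun z => ‖a z‖ ^ 2) →
    ∃ coef : ℤ → 𝕜, Summable (fun n => ‖coef n‖ ^ 2) ∧ ∀ z : Λ, shiftSum φ coef z = a z

lemma MemWienerAmalgam.memℓp_conj_sub_intCast (hφ : MemWienerAmalgam φ) (x : ℝ) :
    Memℓp (fun n : ℤ => conj (φ (x - n))) 2 := by
  obtain ⟨D, -, hD⟩ := hφ.exists_sum_norm_sub_intCast_le
  exact Memℓp.of_exponent_ge (p := 2) (q := 1)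
    (memℓp_gen' (C := D) fun s => by simpa using hD x s) one_le_two

/-- The reproducing vector at `x` of the shift-invariant space `V²(φ)`, in the coordinates
`ℓ²(ℤ, 𝕜)`: its inner product with `coef` is the value at `x` of `∑ coef n · φ(· - n)`. -/
noncomputable def shiftKernel (hφ : MemWienerAmalgam φ) (x : ℝ) : ℓ²(ℤ, 𝕜) :=
  ⟨fun n => conj (φ (x - n)), hφ.memℓp_conj_sub_intCast x⟩

lemma shiftKernel_apply (hφ : MemWienerAmalgam φ) (x : ℝ) (n : ℤ) :
    shiftKernel hφ x n = conj (φ (x - n)) :=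
  rfl

lemma norm_shiftKernel_apply (hφ : MemWienerAmalgam φ) (x : ℝ) (n : ℤ) :
    ‖shiftKernel hφ x n‖ = ‖φ (x - n)‖ :=
  RCLike.norm_conj _

lemma inner_shiftKernel (hφ : MemWienerAmalgam φ) (x : ℝ) (coef : ℓ²(ℤ, 𝕜)) :
    ⟪shiftKernel hφ x, coef⟫_𝕜 = shiftSum φ coef x := by
  simp only [lp.inner_eq_tsum, shiftSum, shiftKernel_apply, RCLike.inner_apply, RCLike.conj_conj]

lemma IsInterpolatingShift.isRieszFischer (hΛ : IsInterpolatingShift φ Λ)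
    (hφ : MemWienerAmalgam φ) : IsRieszFischer 𝕜 fun z : Λ => shiftKernel hφ z := by
  intro y hy
  obtain ⟨coef, hcoef, hval⟩ := hΛ y hy
  refine ⟨⟨coef, memℓp_gen (by simpa using hcoef)⟩, fun z => ?_⟩
  rw [inner_shiftKernel]
  exact hval z

/- `‖k_x - k_y‖²` is at most the modulus of continuity of `φ` at `|x - y|` times the `ℓ¹` norm of
`k_x - k_y`. -/
theorem uniformContinuous_shiftKernel (hφ : MemWienerAmalgam φ) (hcont : Continuous φ) :
    UniformContinuous (shiftKernel hφ) := by
  obtain ⟨D, hD, hsum⟩ := hφ.exists_sum_norm_sub_intCast_le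
  have huc := hcont.uniformContinuous_of_tendsto_cocompact hφ.tendsto_zero_cocompact
  refine Metric.uniformContinuous_iff.mpr fun ε hε => ?_
  set η := ε ^ 2 / (2 * D + 1)
  have hη : 0 < η := by positivity
  obtain ⟨δ, hδ, hclose⟩ := Metric.uniformContinuous_iff.mp huc η hη
  refine ⟨δ, hδ, fun x y hxy => ?_⟩
  have apply_le (n : ℤ) : ‖φ (x - n) - φ (y - n)‖ ≤ η := by
    rw [← dist_eq_norm]
    exact (hclose (by simpa using hxy)).le
  have norm_sq_le : ‖shiftKernel hφ x - shiftKernel hφ y‖ ^ 2 ≤ η * (2 * D) := by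
    refine l2_norm_sq_le_of_forall_sum_le fun s => ?_
    calc ∑ n ∈ s, ‖(shiftKernel hφ x - shiftKernel hφ y) n‖ ^ 2
        = ∑ n ∈ s, ‖φ (x - n) - φ (y - n)‖ * ‖φ (x - n) - φ (y - n)‖ := by
          simp only [lp.coeFn_sub, Pi.sub_apply, shiftKernel_apply, ← map_sub, RCLike.norm_conj, sq]
      _ ≤ ∑ n ∈ s, η * (‖φ (x - n)‖ + ‖φ (y - n)‖) := by
          gcongr with n
          · exact apply_le n
          · exact norm_sub_le _ _
      _ = η * (∑ n ∈ s, ‖φ (x - n)‖ + ∑ n ∈ s, ‖φ (y - n)‖) := by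
          rw [← Finset.mul_sum, Finset.sum_add_distrib]
      _ ≤ η * (2 * D) := by
          rw [two_mul]
          gcongr
          exacts [hsum x s, hsum y s]
  have norm_sq_lt : ‖shiftKernel hφ x - shiftKernel hφ y‖ ^ 2 < ε ^ 2 :=
    calc _ ≤ η * (2 * D) := norm_sq_le
      _ < η * (2 * D + 1) := by gcongr; linarith
      _ = ε ^ 2 := div_mul_cancel₀ _ (by positivity)
  rw [dist_eq_norm]
  exact lt_of_pow_lt_pow_left₀ 2 hε.le norm_sq_lt

theorem exists_linearIndepOn_restrict_shiftKernel (hφ : MemWienerAmalgam φ)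
    (hΛ : IsRieszFischer 𝕜 fun z : Λ => shiftKernel hφ z) (hsep : IsSeparatedSet Λ) :
    ∃ R : ℕ, ∀ x y : ℝ, LinearIndepOn 𝕜
      (fun (z : Λ) (n : Finset.Icc (⌊x⌋ - R) (⌊y⌋ + R)) => shiftKernel hφ z (n : ℤ))
      ((↑) ⁻¹' Set.Icc x y) := by
  obtain ⟨C, hC, hlower⟩ := hΛ.exists_sum_norm_sq_le
  obtain ⟨D, hD, hrow⟩ := hφ.exists_sum_norm_sub_le_of_isSeparatedSet hsep
  set η := 1 / (C * (D + 1))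
  have hη : 0 < η := by positivity
  have hCDη : C * (D * η) < 1 :=
    calc C * (D * η) < C * ((D + 1) * η) := by gcongr; linarith
      _ = 1 := by simp only [η]; field_simp
  obtain ⟨R, htail⟩ := hφ.exists_sum_norm_sub_intCast_tail_lt hη
  refine ⟨R, fun x y => linearIndepOn_iff'.mpr fun t b ht hb => ?_⟩
  have hzero (n : ℤ) (hn : n ∈ Finset.Icc (⌊x⌋ - R) (⌊y⌋ + R)) :
      ∑ z ∈ t, b z * shiftKernel hφ z n = 0 := by
    simpa using congrFun hb ⟨n, hn⟩
  have hcol (z : Λ) (hz : z ∈ t) (s : Finset ℤ)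
      (hs : Disjoint s (Finset.Icc (⌊x⌋ - R) (⌊y⌋ + R))) :
      ∑ n ∈ s, ‖shiftKernel hφ z n‖ ≤ η := by
    simp only [norm_shiftKernel_apply]
    refine (htail z s fun n hn => ?_).le
    have hn' := Finset.disjoint_left.mp hs hn
    have hxz : ⌊x⌋ ≤ ⌊(z : ℝ)⌋ := Int.floor_le_floor (ht hz).1
    have hzy : ⌊(z : ℝ)⌋ ≤ ⌊y⌋ := Int.floor_le_floor (ht hz).2
    rw [Finset.mem_Icc] at hn'
    rw [lt_abs]
    omega
  have hupper : ‖∑ z ∈ t, b z • shiftKernel hφ z‖ ^ 2 ≤ D * η * ∑ z ∈ t, ‖b z‖ ^ 2 :=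
    l2_norm_sum_smul_sq_le hD hzero
      (fun n => by simpa only [norm_shiftKernel_apply] using hrow n t) hcol
  have sum_nonneg : 0 ≤ ∑ z ∈ t, ‖b z‖ ^ 2 := Finset.sum_nonneg fun _ _ => by positivity
  have sum_eq_zero : ∑ z ∈ t, ‖b z‖ ^ 2 = 0 := by
    have hle := (hlower t b).trans (mul_le_mul_of_nonneg_left hupper hC.le)
    nlinarith
  intro z hz
  simpa using (Finset.sum_eq_zero_iff_of_nonneg fun _ _ => by positivity).mp sum_eq_zero z hz

end ShiftInvariantSpace

section Density

lemma ncard_le_of_linearIndepOn {K κ : Type*} [DivisionRing K] [Fintype κ] {Λ I : Set ℝ}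
    {v : Λ → κ → K} (hv : LinearIndepOn K v ((↑) ⁻¹' I)) :
    (Λ ∩ I).ncard ≤ Fintype.card κ := by
  have hle := hv.encard_le_toENat_rank
  rw [rank_fun', Cardinal.toENat_nat, ← Subtype.val_injective.encard_image,
    Subtype.image_preimage_coe] at hle
  exact ENat.toNat_le_of_le_natCast hle

lemma natCast_card_Icc_floor_le {x y : ℝ} (hxy : x ≤ y) (R : ℕ) :
    (#(Finset.Icc (⌊x⌋ - R) (⌊y⌋ + R)) : ℝ) ≤ y - x + (2 * R + 2) := by
  have floor_mono : ⌊x⌋ ≤ ⌊y⌋ := Int.floor_le_floor hxy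
  have card_eq : (#(Finset.Icc (⌊x⌋ - R) (⌊y⌋ + R)) : ℤ) = ⌊y⌋ + R + 1 - (⌊x⌋ - R) :=
    Int.card_Icc_of_le _ _ (by omega)
  have card_eq' : (#(Finset.Icc (⌊x⌋ - R) (⌊y⌋ + R)) : ℝ) = ⌊y⌋ + R + 1 - (⌊x⌋ - R) := by
    exact_mod_cast card_eq
  linarith [Int.floor_le y, Int.lt_floor_add_one x]

theorem upperBeurlingDensity_le {Λ : Set ℝ} {d B : ℝ}
    (h : ∀ x r : ℝ, 0 ≤ r → ((Λ ∩ Set.Icc x (x + r)).ncard : ℝ) ≤ d * r + B) :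
    upperBeurlingDensity Λ ≤ d := by
  have hle : (fun r : ℝ => (⨆ x : ℝ, ((Λ ∩ Set.Icc x (x + r)).ncard : ℝ)) / r) ≤ᶠ[atTop]
      fun r => d + B / r := by
    filter_upwards [eventually_gt_atTop 0] with r hr
    rw [div_le_iff₀ hr, add_mul, div_mul_cancel₀ B hr.ne']
    exact ciSup_le fun x => h x r hr.le
  have hlim : Tendsto (fun r : ℝ => d + B / r) atTop (nhds d) := by
    simpa using (tendsto_const_nhds.div_atTop tendsto_id).const_add d
  have hnonneg : ∀ᶠ r : ℝ in atTop,
      0 ≤ (⨆ x : ℝ, ((Λ ∩ Set.Icc x (x + r)).ncard : ℝ)) / r := by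
    filter_upwards [eventually_gt_atTop 0] with r hr
    exact div_nonneg (Real.iSup_nonneg fun x => Nat.cast_nonneg _) hr.le
  calc upperBeurlingDensity Λ ≤ limsup (fun r : ℝ => d + B / r) atTop :=
        limsup_le_limsup hle (isBoundedUnder_of_eventually_ge hnonneg).isCoboundedUnder_le
          hlim.isBoundedUnder_le
    _ = d := hlim.limsup_eq

end Density

theorem statement4_general {𝕜 : Type*} [RCLike 𝕜] {φ : ℝ → 𝕜} (hcont : Continuous φ)
    (hφ : MemWienerAmalgam φ) {Λ : Set ℝ} (hint : IsInterpolatingShift φ Λ) :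
    IsSeparatedSet Λ ∧ upperBeurlingDensity Λ ≤ 1 := by
  have hΛ := hint.isRieszFischer hφ
  have hsep : IsSeparatedSet Λ := hΛ.isSeparatedSet (uniformContinuous_shiftKernel hφ hcont)
  obtain ⟨R, hindep⟩ := exists_linearIndepOn_restrict_shiftKernel hφ hΛ hsep
  refine ⟨hsep, upperBeurlingDensity_le (B := 2 * R + 2) fun x r hr => ?_⟩
  calc ((Λ ∩ Set.Icc x (x + r)).ncard : ℝ)
      ≤ #(Finset.Icc (⌊x⌋ - R) (⌊x + r⌋ + R)) := by
        simpa using ncard_le_of_linearIndepOn (hindep x (x + r))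
    _ ≤ x + r - x + (2 * R + 2) := natCast_card_Icc_floor_le (by linarith) R
    _ = 1 * r + (2 * R + 2) := by ring

section Gaussian

variable {c : ℂ}

lemma summable_exp_neg_mul_int_sq {a : ℝ} (ha : 0 < a) :
    Summable fun k : ℤ => Real.exp (-a * (k : ℝ) ^ 2) := by
  have isLittleO :
      (fun x : ℝ => Complex.exp (-a * x ^ 2)) =o[cocompact ℝ] fun x => |x| ^ (-2 : ℝ) :=
    isLittleO_exp_neg_mul_sq_cocompact (by simpa using ha) _
  have hsum := summable_of_isBigO (Real.summable_abs_int_rpow one_lt_two)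
    (isLittleO.isBigO.comp_tendsto Int.tendsto_coe_cofinite)
  exact hsum.norm.congr fun k => by simpa using norm_cexp_neg_mul_sq a k

lemma memWienerAmalgam_gaussian (hc : 0 < c.re) :
    MemWienerAmalgam fun x : ℝ => Complex.exp (-c * (x : ℂ) ^ 2) := by
  refine ⟨fun k => Real.exp c.re * Real.exp (-(c.re / 2) * (k : ℝ) ^ 2),
    (summable_exp_neg_mul_int_sq (half_pos hc)).mul_left _, fun x => ?_⟩
  beta_reduce
  rw [norm_cexp_neg_mul_sq, ← Real.exp_add, Real.exp_le_exp]
  have floor_sq_le : (⌊x⌋ : ℝ) ^ 2 ≤ 2 * x ^ 2 + 2 := by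
    rw [← Int.self_sub_fract]
    nlinarith [sq_nonneg (x + Int.fract x), Int.fract_nonneg x, Int.fract_lt_one x]
  nlinarith

lemma gaussShiftSum_eq_shiftSum :
    gaussShiftSum c = shiftSum fun x : ℝ => Complex.exp (-c * (x : ℂ) ^ 2) := by
  ext coef x
  simp only [gaussShiftSum, shiftSum, Complex.ofReal_sub, Complex.ofReal_intCast]

lemma isInterpolatingV2_iff {Λ : Set ℝ} :
    IsInterpolatingV2 c Λ ↔
      IsInterpolatingShift (fun x : ℝ => Complex.exp (-c * (x : ℂ) ^ 2)) Λ := by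
  rw [IsInterpolatingV2, IsInterpolatingShift, gaussShiftSum_eq_shiftSum]

end Gaussian

/-- if `Λ` is interpolating for `V²_a` then `Λ` is separated and
`D⁺(Λ) ≤ 1`. -/
theorem statement4 (a : ℝ) (ha : 0 < a) (Λ : Set ℝ)
    (hint : IsInterpolatingV2 (a : ℂ) Λ) :
    IsSeparatedSet Λ ∧ upperBeurlingDensity Λ ≤ 1 :=
  statement4_general (by fun_prop) (memWienerAmalgam_gaussian (by simpa using ha))
    (isInterpolatingV2_iff.mp hint)
end
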